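/- arXiv:math-ph/0609026 — 3 statements merged into one kernel-verified Lean document; each statement's English description precedes it below -/
import Mathlib

section
/- For every ξ ∈ ℝ, the second eigenvalue of the Neumann realization of -d²/dt² + (t-ξ)² on ℝ₊ is strictly greater than the first eigenvalue of the Dirichlet realization of the same operator on ℝ₊: λ₂^N(ξ) > λ₁^D(ξ). -/
open MeasureTheory Set Filter Topology

noncomputable section

/-- `B¹(ℝ₊)`-type regularity on the half line (smooth core):
`u`, `u'` and `t·u` are square integrable on `(0,∞)`. -/
def MemB1p (u : ℝ → ℝ) : Prop :=
  Differentiable ℝ u ∧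
  IntegrableOn (fun t => (u t)^2) (Ioi 0) ∧
  IntegrableOn (fun t => (deriv u t)^2) (Ioi 0) ∧
  IntegrableOn (fun t => t^2 * (u t)^2) (Ioi 0)

/-- The Robin quadratic form `q[γ,ξ]` of `-d²/dt² + (t-ξ)²` on `ℝ₊`. -/
def qRobin (γ ξ : ℝ) (u : ℝ → ℝ) : ℝ :=
  (∫ t in Ioi (0:ℝ), ((deriv u t)^2 + (t - ξ)^2 * (u t)^2)) + γ * (u 0)^2

/-- squared `L²(ℝ₊)` norm. -/
def np (u : ℝ → ℝ) : ℝ := ∫ t in Ioi (0:ℝ), (u t)^2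

/-- Lowest Robin eigenvalue `λ₁(γ,ξ)`, defined variationally. -/
def lambda1 (γ ξ : ℝ) : ℝ :=
  sInf {r : ℝ | ∃ u : ℝ → ℝ, MemB1p u ∧ np u ≠ 0 ∧ r = qRobin γ ξ u / np u}

/-- Lowest Neumann eigenvalue `λ₁^N(ξ)` (Robin with `γ = 0`). -/
def lambda1N (ξ : ℝ) : ℝ := lambda1 0 ξ

/-- Lowest Dirichlet eigenvalue `λ₁^D(ξ)`, defined variationally. -/
def lambda1D (ξ : ℝ) : ℝ :=
  sInf {r : ℝ | ∃ u : ℝ → ℝ, MemB1p u ∧ u 0 = 0 ∧ np u ≠ 0 ∧ r = qRobin 0 ξ u / np u}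

/-- The de Gennes constant `Θ₀ = inf_ξ λ₁^N(ξ)`. -/
def Theta0 : ℝ := sInf (Set.range lambda1N)

/-- `B¹(ℝ)`-type regularity on the whole line (smooth core). -/
def MemB1 (u : ℝ → ℝ) : Prop :=
  Differentiable ℝ u ∧
  Integrable (fun t => (u t)^2) ∧
  Integrable (fun t => (deriv u t)^2) ∧
  Integrable (fun t => t^2 * (u t)^2)

/-- The interface quadratic form `Q[a,m,α;ξ]` on `B¹(ℝ)`. -/
def QI (a m α ξ : ℝ) (u : ℝ → ℝ) : ℝ :=
  (∫ t in Ioi (0:ℝ), ((deriv u t)^2 + (t - ξ)^2 * (u t)^2 - α * (u t)^2)) +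
  ∫ t in Iio (0:ℝ), ((1/m) * ((deriv u t)^2 + (t - ξ)^2 * (u t)^2) + a * α * (u t)^2)

/-- squared `L²(ℝ)` norm. -/
def nR (u : ℝ → ℝ) : ℝ := ∫ t, (u t)^2

/-- Ground state energy `μ₁(a,m,α;ξ)` of the interface operator, defined variationally. -/
def mu1 (a m α ξ : ℝ) : ℝ :=
  sInf {r : ℝ | ∃ u : ℝ → ℝ, MemB1 u ∧ nR u ≠ 0 ∧ r = QI a m α ξ u / nR u}

/-- `λ` is a Neumann eigenvalue of `-d²/dt² + (t-ξ)²` on `ℝ₊`. -/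
def IsNeumannEigenvalue (ξ lam : ℝ) : Prop :=
  ∃ u : ℝ → ℝ, MemB1p u ∧ np u ≠ 0 ∧ deriv u 0 = 0 ∧
    ∀ t : ℝ, 0 < t → HasDerivAt (deriv u) (((t - ξ)^2 - lam) * u t) t

/-- The second Neumann eigenvalue: the smallest Neumann eigenvalue above `λ₁^N(ξ)`. -/
def lambda2N (ξ : ℝ) : ℝ :=
  sInf {lam : ℝ | IsNeumannEigenvalue ξ lam ∧ lambda1N ξ < lam}


def pcG (p x : ℝ) : ℝ := ∫ s in Ioi (0:ℝ), s^(p-1) * Real.exp (-2*x*s - s^2)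

lemma pc_meas (p x : ℝ) : Measurable (fun s : ℝ => s^(p-1) * Real.exp (-2*x*s - s^2)) := by
  fun_prop

lemma pc_int {p : ℝ} (hp : 0 < p) (x : ℝ) :
    IntegrableOn (fun s : ℝ => s^(p-1) * Real.exp (-2*x*s - s^2)) (Ioi 0) := by
  have h := (integrableOn_rpow_mul_exp_neg_mul_sq (b := 1/2) (by norm_num) (s := p-1)
    (by linarith)).const_mul (Real.exp (2*x^2))
  refine Integrable.mono' h (pc_meas p x).aestronglyMeasurable ?_
  refine (ae_restrict_iff' measurableSet_Ioi).2 (Eventually.of_forall fun s hs => ?_)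
  have hs' : (0:ℝ) < s := hs
  have h1 : 0 ≤ s^(p-1) := Real.rpow_nonneg hs'.le _
  rw [Real.norm_of_nonneg (by positivity), mul_left_comm, ← Real.exp_add]
  gcongr
  nlinarith [sq_nonneg (2*x+s)]

lemma pcG_pos {p : ℝ} (hp : 0 < p) (x : ℝ) : 0 < pcG p x := by
  unfold pcG
  rw [setIntegral_pos_iff_support_of_nonneg_ae]
  · have : Function.support (fun s : ℝ => s^(p-1) * Real.exp (-2*x*s - s^2)) ∩ Ioi 0 = Ioi 0 := by
      apply inter_eq_right.2
      intro s hs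
      have hs' : (0:ℝ) < s := hs
      exact (mul_pos (Real.rpow_pos_of_pos hs' _) (Real.exp_pos _)).ne'
    rw [this]; simp
  · refine (ae_restrict_iff' measurableSet_Ioi).2 (Eventually.of_forall fun s hs => ?_)
    have hs' : (0:ℝ) < s := hs
    exact (mul_pos (Real.rpow_pos_of_pos hs' _) (Real.exp_pos _)).le
  · exact pc_int hp x

lemma pcG_deriv {p : ℝ} (hp : 0 < p) (x : ℝ) : HasDerivAt (pcG p) (-2 * pcG (p+1) x) x := by
  have key := (hasDerivAt_integral_of_dominated_loc_of_deriv_le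
    (μ := volume.restrict (Ioi (0:ℝ)))
    (F := fun x s : ℝ => s^(p-1) * Real.exp (-2*x*s - s^2))
    (F' := fun x s : ℝ => -2 * (s^(p+1-1) * Real.exp (-2*x*s - s^2)))
    (x₀ := x) (s := Metric.ball x 1)
    (bound := fun s => 2 * (s^(p+1-1) * Real.exp (-2*(x-1)*s - s^2)))
    (Metric.ball_mem_nhds x one_pos) ?_ (pc_int hp x) ?_ ?_ ?_ ?_).2
  · rw [integral_const_mul] at key
    exact key
  · exact Eventually.of_forall fun y => (pc_meas p y).aestronglyMeasurable
  · exact ((pc_meas (p+1) x).const_mul _).aestronglyMeasurable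
  · refine (ae_restrict_iff' measurableSet_Ioi).2 (Eventually.of_forall fun s hs y hy => ?_)
    have hs' : (0:ℝ) < s := hs
    have h1 : 0 ≤ s^(p+1-1) := Real.rpow_nonneg hs'.le _
    rw [Metric.mem_ball, Real.dist_eq, abs_lt] at hy
    rw [norm_mul, Real.norm_of_nonneg (by positivity : 0 ≤ s^(p+1-1) * Real.exp (-2*y*s - s^2))]
    norm_num
    gcongr
    nlinarith
  · exact (pc_int (p := p+1) (by linarith) (x-1)).const_mul 2
  · refine (ae_restrict_iff' measurableSet_Ioi).2 (Eventually.of_forall fun s hs y hy => ?_)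
    have hs' : (0:ℝ) < s := hs
    have h1 : HasDerivAt (fun y : ℝ => -2*y*s - s^2) (-2*s) y := by
      simpa using ((((hasDerivAt_id y).const_mul (-2)).mul_const s).sub_const (s^2))
    have h2 := (h1.exp).const_mul (s^(p-1))
    refine h2.congr_deriv ?_
    rw [show p+1-1 = (p-1)+1 by ring, Real.rpow_add_one hs'.ne']
    ring

lemma pcG_rec {p : ℝ} (hp : 0 < p) (x : ℝ) : p * pcG p x = 2*x*pcG (p+1) x + 2*pcG (p+2) x := by
  have hi1 := (pc_int hp x).const_mul p
  have hi2 := (pc_int (p := p+1) (by linarith) x).const_mul (2*x)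
  have hi3 := (pc_int (p := p+2) (by linarith) x).const_mul 2
  have hi12 : Integrable (fun s : ℝ => p * (s^(p-1) * Real.exp (-2*x*s - s^2)) -
      2*x*(s^(p+1-1) * Real.exp (-2*x*s - s^2))) (volume.restrict (Ioi 0)) := hi1.sub hi2
  have h : ∫ s in Ioi (0:ℝ), (p * (s^(p-1) * Real.exp (-2*x*s - s^2)) -
      2*x*(s^(p+1-1) * Real.exp (-2*x*s - s^2)) -
      2*(s^(p+2-1) * Real.exp (-2*x*s - s^2))) =
        0 - (0:ℝ)^p * Real.exp (-2*x*0 - 0^2) := by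
    refine integral_Ioi_of_hasDerivAt_of_tendsto (f := fun s => s^p * Real.exp (-2*x*s - s^2))
      ?_ ?_ (hi12.sub hi3) ?_
    · have : ContinuousAt (fun s : ℝ => s^p * Real.exp (-2*x*s - s^2)) 0 := by
        apply ContinuousAt.mul
        · exact Real.continuousAt_rpow_const _ _ (Or.inr hp.le)
        · fun_prop
      have := this.continuousWithinAt (s := Ici 0)
      exact this
    · intro s hs
      have hs' : (0:ℝ) < s := hs
      have h1 : HasDerivAt (fun s : ℝ => -2*x*s - s^2) (-2*x - 2*s) s := by
        exact HasDerivAt.congr_deriv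
          (((hasDerivAt_id s).const_mul (-2*x)).sub ((hasDerivAt_id s).pow 2)) (by simp)
      have h2 := (Real.hasDerivAt_rpow_const (p := p) (Or.inl hs'.ne')).mul h1.exp
      refine h2.congr_deriv ?_
      rw [show p+2-1 = p + 1 by ring, show p+1-1 = p by ring, Real.rpow_add_one hs'.ne']
      ring
    · have h1 : Tendsto (fun s : ℝ => Real.exp (2*x^2) * (s^p * Real.exp (-(1/2) * s))) atTop (𝓝 (Real.exp (2*x^2) * 0)) :=
        (tendsto_rpow_mul_exp_neg_mul_atTop_nhds_zero p (1/2) (by norm_num)).const_mul _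
      rw [mul_zero] at h1
      refine squeeze_zero' ?_ ?_ h1
      · filter_upwards [eventually_ge_atTop 1] with s hs
        have : 0 ≤ s^p := Real.rpow_nonneg (by linarith) _
        positivity
      · filter_upwards [eventually_ge_atTop 1] with s hs
        have : 0 ≤ s^p := Real.rpow_nonneg (by linarith) _
        rw [mul_left_comm, ← Real.exp_add]
        gcongr
        nlinarith [sq_nonneg (2*x+s)]
  rw [Real.zero_rpow hp.ne', integral_sub hi12 hi3, integral_sub hi1 hi2, integral_const_mul,
    integral_const_mul, integral_const_mul] at h
  unfold pcG
  linarith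

lemma pcG_cont {p : ℝ} (hp : 0 < p) (x : ℝ) : ContinuousAt (fun p => pcG p x) p := by
  unfold pcG
  refine continuousAt_of_dominated
    (bound := fun s => s^(p/2-1) * Real.exp (-2*x*s - s^2) + s^(p+1-1) * Real.exp (-2*x*s - s^2))
    ?_ ?_ ?_ ?_
  · exact Eventually.of_forall fun y => (pc_meas y x).aestronglyMeasurable
  · filter_upwards [Ioo_mem_nhds (show p/2 < p by linarith) (show p < p+1 by linarith)] with q hq
    refine (ae_restrict_iff' measurableSet_Ioi).2 (Eventually.of_forall fun s hs => ?_)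
    have hs' : (0:ℝ) < s := hs
    have h0 : ∀ r : ℝ, 0 ≤ s^r := fun r => Real.rpow_nonneg hs'.le _
    rw [Real.norm_of_nonneg (mul_nonneg (h0 _) (Real.exp_pos _).le), ← add_mul]
    gcongr
    rcases le_total s 1 with h | h
    · have := Real.rpow_le_rpow_of_exponent_ge hs' h (show p/2-1 ≤ q-1 by linarith [hq.1])
      linarith [h0 (p+1-1)]
    · have := Real.rpow_le_rpow_of_exponent_le h (show q-1 ≤ p+1-1 by linarith [hq.2])
      linarith [h0 (p/2-1)]
  · exact (pc_int (by linarith) x).add (pc_int (by linarith) x)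
  · refine (ae_restrict_iff' measurableSet_Ioi).2 (Eventually.of_forall fun s hs => ?_)
    have hs' : (0:ℝ) < s := hs
    apply ContinuousAt.mul _ continuousAt_const
    exact ContinuousAt.rpow continuousAt_const (by fun_prop) (Or.inl hs'.ne')

def pcE : ℕ → ℝ → ℝ → ℝ
  | 0, p, x => pcG p x / Real.Gamma p
  | n+1, p, x => 2*x*pcE n (p+1) x + 2*(p+1)*pcE n (p+2) x

lemma pcE_props (n : ℕ) : ∀ p : ℝ, -(n:ℝ) < p → ∀ x : ℝ,
    HasDerivAt (pcE n p) (-2*p*pcE n (p+1) x) x ∧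
    pcE n p x = 2*x*pcE n (p+1) x + 2*(p+1)*pcE n (p+2) x ∧
    ContinuousAt (fun p => pcE n p x) p := by
  induction n with
  | zero =>
    intro p hp x
    have hp : 0 < p := by simpa using hp
    have hG := Real.Gamma_pos_of_pos hp
    have e1 : Real.Gamma (p+1) = p * Real.Gamma p := Real.Gamma_add_one hp.ne'
    have e2 : Real.Gamma (p+2) = (p+1) * (p * Real.Gamma p) := by
      rw [show p+2 = (p+1)+1 by ring, Real.Gamma_add_one (by positivity), e1]
    refine ⟨?_, ?_, ?_⟩
    · have := (pcG_deriv hp x).div_const (Real.Gamma p)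
      show HasDerivAt (fun x => pcG p x / Real.Gamma p) (-2*p*(pcG (p+1) x / Real.Gamma (p+1))) x
      refine this.congr_deriv ?_
      rw [e1]; field_simp
    · show pcG p x / Real.Gamma p = 2*x*(pcG (p+1) x / Real.Gamma (p+1)) +
        2*(p+1)*(pcG (p+2) x / Real.Gamma (p+2))
      have := pcG_rec hp x
      rw [e1, e2]; field_simp; linarith
    · show ContinuousAt (fun p => pcG p x / Real.Gamma p) p
      refine (pcG_cont hp x).div ?_ hG.ne'
      exact (Real.differentiableAt_Gamma fun m => by
        have : (0:ℝ) ≤ m := Nat.cast_nonneg m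
        linarith).continuousAt
  | succ n ih =>
    intro p hp x
    push_cast at hp
    obtain ⟨d1, r1, c1⟩ := ih (p+1) (by linarith) x
    obtain ⟨d2, r2, c2⟩ := ih (p+2) (by linarith) x
    have e3 : p+1+1 = p+2 := by ring
    have e4 : p+1+2 = p+3 := by ring
    have e5 : p+2+1 = p+3 := by ring
    rw [e3, e4] at r1
    rw [e3] at d1
    rw [e5] at d2
    have s1 : pcE (n+1) (p+1) x = pcE n (p+1) x := by
      show 2*x*pcE n (p+1+1) x + 2*(p+1+1)*pcE n (p+1+2) x = _
      rw [r1, e3, e4]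
    have s2 : pcE (n+1) (p+2) x = pcE n (p+2) x := by
      show 2*x*pcE n (p+2+1) x + 2*(p+2+1)*pcE n (p+2+2) x = _
      rw [r2]
    refine ⟨?_, ?_, ?_⟩
    · show HasDerivAt (fun x => 2*x*pcE n (p+1) x + 2*(p+1)*pcE n (p+2) x) _ x
      have h := ((((hasDerivAt_id x).const_mul 2).mul d1)).add (d2.const_mul (2*(p+1)))
      refine h.congr_deriv ?_
      simp only [id]
      rw [s1]
      linear_combination (2*(p+1)) * r1
    · rw [s1, s2]; rfl
    · show ContinuousAt (fun p => 2*x*pcE n (p+1) x + 2*(p+1)*pcE n (p+2) x) p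
      have c1' : ContinuousAt (fun p => pcE n (p+1) x) p :=
        ContinuousAt.comp (f := fun p : ℝ => p+1) (g := fun p => pcE n p x) c1 (by fun_prop)
      have c2' : ContinuousAt (fun p => pcE n (p+2) x) p :=
        ContinuousAt.comp (f := fun p : ℝ => p+2) (g := fun p => pcE n p x) c2 (by fun_prop)
      fun_prop

lemma pcE_stable {n m : ℕ} (h : n ≤ m) {p : ℝ} (hp : -(n:ℝ) < p) (x : ℝ) :
    pcE m p x = pcE n p x := by
  induction m, h using Nat.le_induction with
  | base => rfl
  | succ m hm ih =>
    rw [← ih]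
    have : (n:ℝ) ≤ m := by exact_mod_cast hm
    exact ((pcE_props m p (by linarith) x).2.1).symm

def pcg (p x : ℝ) : ℝ := pcE (⌊|p|⌋₊+1) p x

lemma pcg_eq {n : ℕ} {p : ℝ} (hp : -(n:ℝ) < p) (x : ℝ) : pcg p x = pcE n p x := by
  unfold pcg
  have h1 : -((⌊|p|⌋₊+1 : ℕ):ℝ) < p := by
    push_cast
    linarith [Nat.lt_floor_add_one |p|, neg_abs_le p]
  rcases le_total n (⌊|p|⌋₊+1) with h | h
  · exact pcE_stable h hp x
  · exact (pcE_stable h h1 x).symm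

lemma pcg_pos {p : ℝ} (hp : 0 < p) (x : ℝ) : 0 < pcg p x := by
  rw [pcg_eq (n := 0) (by simpa using hp)]
  exact div_pos (pcG_pos hp x) (Real.Gamma_pos_of_pos hp)

lemma pc_exists_n (p : ℝ) : ∃ n : ℕ, -(n:ℝ) < p := by
  obtain ⟨n, hn⟩ := exists_nat_gt (-p)
  exact ⟨n, by linarith⟩

lemma pcg_deriv (p x : ℝ) : HasDerivAt (pcg p) (-2*p*pcg (p+1) x) x := by
  obtain ⟨n, hn⟩ := pc_exists_n p
  have h : pcg p = pcE n p := funext fun y => pcg_eq hn y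
  rw [h, pcg_eq (n := n) (by linarith)]
  exact (pcE_props n p hn x).1

lemma pcg_rec (p x : ℝ) : pcg p x = 2*x*pcg (p+1) x + 2*(p+1)*pcg (p+2) x := by
  obtain ⟨n, hn⟩ := pc_exists_n p
  rw [pcg_eq hn, pcg_eq (n := n) (p := p+1) (by linarith), pcg_eq (n := n) (p := p+2) (by linarith)]
  exact (pcE_props n p hn x).2.1

lemma pcg_cont (x : ℝ) : Continuous (fun p => pcg p x) := by
  rw [continuous_iff_continuousAt]
  intro p
  obtain ⟨n, hn⟩ := pc_exists_n p
  refine (pcE_props n p hn x).2.2.congr ?_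
  filter_upwards [Ioi_mem_nhds hn] with q hq
  exact (pcg_eq hq x).symm

/-! ### Growth, decaying solutions -/

lemma pcg_bigO (p : ℝ) : ∃ n : ℕ, pcg p =O[atTop] fun x : ℝ => x^n := by
  obtain ⟨N, hN⟩ := pc_exists_n p
  have base : ∀ p : ℝ, 0 < p → ∃ n : ℕ, pcg p =O[atTop] fun x : ℝ => x^n := by
    intro p hp
    refine ⟨0, ?_⟩
    have hanti : Antitone (pcg p) := by
      refine antitone_of_hasDerivAt_nonpos (pcg_deriv p) fun x => ?_
      have := pcg_pos (show 0 < p+1 by linarith) x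
      show -2*p*pcg (p+1) x ≤ 0
      nlinarith [mul_pos hp this]
    refine Asymptotics.IsBigO.of_bound (pcg p 0) ?_
    filter_upwards [eventually_ge_atTop 0] with x hx
    rw [Real.norm_of_nonneg (pcg_pos hp x).le]
    simpa using hanti hx
  have main : ∀ N : ℕ, ∀ p : ℝ, -(N:ℝ) < p → ∃ n : ℕ, pcg p =O[atTop] fun x : ℝ => x^n := by
    intro N
    induction N with
    | zero => intro p hp; exact base p (by simpa using hp)
    | succ N ih =>
      intro p hp
      push_cast at hp
      obtain ⟨n, hn⟩ := ih (p+1) (by linarith)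
      obtain ⟨m, hm⟩ := ih (p+2) (by linarith)
      refine ⟨n+1+m, ?_⟩
      have hle : ∀ {a b : ℕ}, a ≤ b → (fun x : ℝ => x^a) =O[atTop] fun x : ℝ => x^b := by
        intro a b hab
        refine Asymptotics.IsBigO.of_bound 1 ?_
        filter_upwards [eventually_ge_atTop 1] with x hx
        rw [Real.norm_of_nonneg (by positivity), Real.norm_of_nonneg (by positivity), one_mul]
        exact pow_le_pow_right₀ hx hab
      have e : pcg p = fun x => 2*(x*pcg (p+1) x) + (2*(p+1))*pcg (p+2) x := by
        funext x; rw [pcg_rec]; ring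
      rw [e]
      refine Asymptotics.IsBigO.add (Asymptotics.IsBigO.const_mul_left ?_ _)
        (Asymptotics.IsBigO.const_mul_left (hm.trans (hle (by omega))) _)
      have h1 : (fun x : ℝ => x*pcg (p+1) x) =O[atTop] fun x : ℝ => x * x^n :=
        (Asymptotics.isBigO_refl _ _).mul hn
      refine h1.trans ?_
      have : (fun x : ℝ => x * x^n) = fun x : ℝ => x^(n+1) := by
        funext x; ring
      rw [this]
      exact hle (by omega)
  exact main N p hN

def pcψ (ξ p t : ℝ) : ℝ := Real.exp (-(t-ξ)^2/2) * pcg p (t-ξ)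

def pcψd (ξ p t : ℝ) : ℝ :=
  Real.exp (-(t-ξ)^2/2) * (-(t-ξ) * pcg p (t-ξ) - 2*p*pcg (p+1) (t-ξ))

lemma pc_shift (ξ p t : ℝ) :
    HasDerivAt (fun t => pcg p (t-ξ)) (-2*p*pcg (p+1) (t-ξ)) t := by
  have := (pcg_deriv p (t-ξ)).comp_sub_const t ξ
  exact this

lemma pc_exp (ξ t : ℝ) :
    HasDerivAt (fun t : ℝ => Real.exp (-(t-ξ)^2/2)) (Real.exp (-(t-ξ)^2/2) * (-(t-ξ))) t := by
  have h : HasDerivAt (fun t : ℝ => -(t-ξ)^2/2) (-(t-ξ)) t := by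
    refine HasDerivAt.congr_deriv
      (((((hasDerivAt_id t).sub_const ξ).pow 2).neg).div_const 2) ?_
    simp
    ring
  exact h.exp

lemma pcψ_deriv (ξ p t : ℝ) : HasDerivAt (pcψ ξ p) (pcψd ξ p t) t := by
  refine HasDerivAt.congr_deriv ((pc_exp ξ t).mul (pc_shift ξ p t)) ?_
  unfold pcψd
  ring

lemma pcψd_deriv (ξ p t : ℝ) :
    HasDerivAt (pcψd ξ p) (((t-ξ)^2 - (1-2*p)) * pcψ ξ p t) t := by
  have h := (pc_exp ξ t).mul (((((hasDerivAt_id t).sub_const ξ).neg).mul (pc_shift ξ p t)).sub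
    ((pc_shift ξ (p+1) t).const_mul (2*p)))
  refine HasDerivAt.congr_deriv h ?_
  unfold pcψ
  have r := pcg_rec p (t-ξ)
  rw [show p+1+1 = p+2 by ring]
  simp only [id, Pi.neg_apply, Pi.sub_apply, Pi.mul_apply]
  linear_combination (-2 * p * Real.exp (-(t-ξ)^2/2)) * r

lemma pcψ_deriv_eq (ξ p : ℝ) : deriv (pcψ ξ p) = pcψd ξ p :=
  funext fun t => (pcψ_deriv ξ p t).deriv

lemma pcψ_cont (ξ p : ℝ) : Continuous (pcψ ξ p) :=
  continuous_iff_continuousAt.2 fun t => (pcψ_deriv ξ p t).continuousAt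

lemma pcψd_cont (ξ p : ℝ) : Continuous (pcψd ξ p) :=
  continuous_iff_continuousAt.2 fun t => (pcψd_deriv ξ p t).continuousAt

lemma pc_decay0 (n : ℕ) (c : ℝ) :
    (fun x : ℝ => Real.exp (-x^2/2) * x^n) =O[atTop] fun x : ℝ => Real.exp (-c*x) := by
  have h1 : Tendsto (fun x : ℝ => x^n * Real.exp (-x)) atTop (𝓝 0) :=
    Real.tendsto_pow_mul_exp_neg_atTop_nhds_zero n
  have h2 : (fun x : ℝ => Real.exp (-x^2/2) * x^n) =O[atTop]
      fun x : ℝ => Real.exp (-c*x) * (x^n * Real.exp (-x)) := by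
    refine Asymptotics.IsBigO.of_bound 1 ?_
    filter_upwards [eventually_ge_atTop 0, eventually_ge_atTop (2*(c+1))] with x hx hx2
    rw [Real.norm_of_nonneg (by positivity), Real.norm_of_nonneg (by positivity), one_mul,
      mul_left_comm, ← Real.exp_add, mul_comm]
    gcongr
    nlinarith
  refine h2.trans ?_
  have := (Asymptotics.isBigO_refl (fun x : ℝ => Real.exp (-c*x)) atTop).mul (h1.isBigO_one ℝ)
  simpa using this

lemma pc_decay (ξ : ℝ) (P : ℝ → ℝ) (n : ℕ) (hP : P =O[atTop] fun x : ℝ => x^n) :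
    (fun t : ℝ => Real.exp (-(t-ξ)^2/2) * P (t-ξ)) =O[atTop] fun t : ℝ => Real.exp (-2*t) := by
  have h1 : (fun x : ℝ => Real.exp (-x^2/2) * P x) =O[atTop] fun x : ℝ => Real.exp (-2*x) :=
    ((Asymptotics.isBigO_refl _ _).mul hP).trans (pc_decay0 n 2)
  have ht : Tendsto (fun t : ℝ => t - ξ) atTop atTop :=
    tendsto_atTop_add_const_right _ (-ξ) tendsto_id
  have h2 := h1.comp_tendsto ht
  refine h2.trans ?_
  refine Asymptotics.IsBigO.of_bound (Real.exp (2*ξ)) (Eventually.of_forall fun t => ?_)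
  simp only [Function.comp, Real.norm_eq_abs, Real.abs_exp]
  rw [← Real.exp_add]
  apply le_of_eq; congr 1; ring

lemma pcψ_bigO (ξ p : ℝ) : pcψ ξ p =O[atTop] fun t : ℝ => Real.exp (-2*t) := by
  obtain ⟨n, hn⟩ := pcg_bigO p
  exact pc_decay ξ _ n hn

lemma pcψd_bigO (ξ p : ℝ) : pcψd ξ p =O[atTop] fun t : ℝ => Real.exp (-2*t) := by
  obtain ⟨n, hn⟩ := pcg_bigO p
  obtain ⟨m, hm⟩ := pcg_bigO (p+1)
  have h1 := pc_decay ξ (fun x => x * pcg p x) (n+1) (by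
    have := (Asymptotics.isBigO_refl (fun x : ℝ => x) atTop).mul hn
    refine this.congr_right fun x => ?_
    ring)
  have h2 := (pc_decay ξ _ m hm).const_mul_left (-(2*p))
  refine ((h1.const_mul_left (-1)).add h2).congr_left fun t => ?_
  unfold pcψd; ring

lemma pc_prod_int {f g : ℝ → ℝ} (hf : Continuous f) (hg : Continuous g)
    (h1 : f =O[atTop] fun t : ℝ => Real.exp (-2*t)) (h2 : g =O[atTop] fun t : ℝ => Real.exp (-2*t))
    (k : ℕ) : IntegrableOn (fun t => t^k * (f t * g t)) (Ioi 0) := by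
  refine integrable_of_isBigO_exp_neg (b := 1) one_pos (by fun_prop) ?_
  have h3 : (fun t : ℝ => t^k * Real.exp (-t)) =O[atTop] fun _ => (1:ℝ) :=
    (Real.tendsto_pow_mul_exp_neg_atTop_nhds_zero k).isBigO_one ℝ
  have h4 := (h3.mul (Asymptotics.isBigO_refl (fun t : ℝ => Real.exp t) atTop)).mul (h1.mul h2)
  refine (h4.congr_left fun t => ?_).trans ?_
  · rw [mul_assoc (t^k), ← Real.exp_add]; simp
  · refine Asymptotics.IsBigO.of_bound 1 ?_
    filter_upwards [eventually_ge_atTop 0] with t ht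
    simp only [Real.norm_eq_abs, one_mul, abs_mul, Real.abs_exp]
    rw [← Real.exp_add, ← Real.exp_add]
    gcongr
    linarith

lemma pcψ_mem (ξ p : ℝ) : MemB1p (pcψ ξ p) := by
  refine ⟨fun t => (pcψ_deriv ξ p t).differentiableAt, ?_, ?_, ?_⟩
  · have := pc_prod_int (pcψ_cont ξ p) (pcψ_cont ξ p) (pcψ_bigO ξ p) (pcψ_bigO ξ p) 0
    refine this.congr (Eventually.of_forall fun t => ?_)
    simp; ring
  · rw [pcψ_deriv_eq]
    have := pc_prod_int (pcψd_cont ξ p) (pcψd_cont ξ p) (pcψd_bigO ξ p) (pcψd_bigO ξ p) 0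
    refine this.congr (Eventually.of_forall fun t => ?_)
    simp; ring
  · have := pc_prod_int (pcψ_cont ξ p) (pcψ_cont ξ p) (pcψ_bigO ξ p) (pcψ_bigO ξ p) 2
    refine this.congr (Eventually.of_forall fun t => ?_)
    show t^2 * (pcψ ξ p t * pcψ ξ p t) = t^2 * (pcψ ξ p t)^2
    ring

/-- For members of the form domain, the energy density is integrable. -/
lemma memB1p_V {u : ℝ → ℝ} (hu : MemB1p u) (ξ : ℝ) :
    IntegrableOn (fun t => (t-ξ)^2 * (u t)^2) (Ioi 0) := by
  obtain ⟨hd, h0, h1, h2⟩ := hu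
  have hb : IntegrableOn (fun t => 2*(t^2 * (u t)^2) + (2*ξ^2) * (u t)^2) (Ioi 0) :=
    (h2.const_mul 2).add (h0.const_mul (2*ξ^2))
  have hc := hd.continuous
  refine Integrable.mono' hb (by fun_prop) (Eventually.of_forall fun t => ?_)
  rw [Real.norm_of_nonneg (by positivity)]
  nlinarith [mul_nonneg (sq_nonneg (t+ξ)) (sq_nonneg (u t))]

lemma memB1p_e {u : ℝ → ℝ} (hu : MemB1p u) (ξ : ℝ) :
    IntegrableOn (fun t => (deriv u t)^2 + (t-ξ)^2 * (u t)^2) (Ioi 0) :=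
  hu.2.2.1.add (memB1p_V hu ξ)

lemma q_sub {u : ℝ → ℝ} (hu : MemB1p u) (ξ lam : ℝ) :
    qRobin 0 ξ u - lam * np u =
      ∫ t in Ioi (0:ℝ), ((deriv u t)^2 + (t-ξ)^2 * (u t)^2 - lam * (u t)^2) := by
  rw [integral_sub (memB1p_e hu ξ) (hu.2.1.const_mul lam), integral_const_mul]
  unfold qRobin np
  ring

lemma np_nonneg (u : ℝ → ℝ) : 0 ≤ np u := integral_nonneg fun t => sq_nonneg _

lemma q_nonneg (ξ : ℝ) (u : ℝ → ℝ) : 0 ≤ qRobin 0 ξ u := by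
  unfold qRobin
  rw [zero_mul, add_zero]
  exact integral_nonneg fun t => by positivity

/-- Integration by parts for the decaying solution with Dirichlet condition. -/
lemma pcψ_q (ξ p : ℝ) (h0 : pcψ ξ p 0 * pcψd ξ p 0 = 0) :
    qRobin 0 ξ (pcψ ξ p) - (1-2*p) * np (pcψ ξ p) = 0 := by
  have hm := pcψ_mem ξ p
  rw [q_sub hm]
  have hFint := (memB1p_e hm ξ).sub (hm.2.1.const_mul (1-2*p))
  rw [pcψ_deriv_eq] at hFint ⊢
  have := integral_Ioi_of_hasDerivAt_of_tendsto' (a := 0) (m := 0)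
    (f := fun t => pcψ ξ p t * pcψd ξ p t)
    (f' := fun t => (pcψd ξ p t)^2 + (t-ξ)^2 * (pcψ ξ p t)^2 - (1-2*p) * (pcψ ξ p t)^2)
    (fun t _ => ((pcψ_deriv ξ p t).mul (pcψd_deriv ξ p t)).congr_deriv (by ring)) hFint ?_
  · rw [this, h0]; ring
  · have h := (pcψ_bigO ξ p).mul (pcψd_bigO ξ p)
    refine h.trans_tendsto ?_
    have : Tendsto (fun t : ℝ => Real.exp (-2*t)) atTop (𝓝 0) := by
      apply Real.tendsto_exp_atBot.comp
      exact tendsto_id.const_mul_atTop_of_neg (by norm_num)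
    simpa using this.mul this

lemma pc_np_ne (ξ p : ℝ) : np (pcψ ξ p) ≠ 0 := by
  intro h
  have hz : ∀ t : ℝ, 0 < t → pcψ ξ p t = 0 := by
    unfold np at h
    rw [integral_eq_zero_iff_of_nonneg (fun t => sq_nonneg _) (pcψ_mem ξ p).2.1] at h
    have h2 := Measure.eqOn_open_of_ae_eq (U := Ioi (0:ℝ)) h isOpen_Ioi
      ((pcψ_cont ξ p).pow 2).continuousOn continuousOn_const
    intro t ht
    exact pow_eq_zero_iff two_ne_zero |>.1 (h2 ht)
  have hg : ∀ x : ℝ, -ξ < x → pcg p x = 0 := by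
    intro x hx
    have := hz (x+ξ) (by linarith)
    unfold pcψ at this
    rw [add_sub_cancel_right] at this
    exact (mul_eq_zero.1 this).resolve_left (Real.exp_pos _).ne'
  have main : ∀ N : ℕ, ∀ p : ℝ, -(N:ℝ) < p → ¬ ∀ x : ℝ, -ξ < x → pcg p x = 0 := by
    intro N
    induction N with
    | zero =>
      intro p hp hall
      exact (pcg_pos (by simpa using hp) _).ne' (hall (-ξ+1) (by linarith))
    | succ N ih =>
      intro p hp hall
      push_cast at hp
      by_cases hp0 : p = 0
      · subst hp0
        have hx := hall (|ξ|+1) (by linarith [neg_abs_le ξ])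
        rw [pcg_rec] at hx
        have h1 := pcg_pos (show (0:ℝ) < 0+1 by norm_num) (|ξ|+1)
        have h2 := pcg_pos (show (0:ℝ) < 0+2 by norm_num) (|ξ|+1)
        have : 0 ≤ |ξ| := abs_nonneg _
        nlinarith [mul_nonneg this h1.le]
      · refine ih (p+1) (by linarith) fun x hx => ?_
        have hd := pcg_deriv p x
        have hd0 : HasDerivAt (pcg p) 0 x := by
          refine (hasDerivAt_const x (0:ℝ)).congr_of_eventuallyEq ?_
          filter_upwards [Ioi_mem_nhds hx] with y hy
          exact hall y hy
        have := hd.unique hd0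
        rcases mul_eq_zero.1 this with h | h
        · exact absurd h (by simpa using hp0)
        · exact h
  obtain ⟨N, hN⟩ := pc_exists_n p
  exact main N p hN hg

/-! ### Recurrence lemmas -/

lemma rec_pos_false (x : ℝ) (h : ℕ → ℝ) (m0 : ℕ)
    (hr : ∀ m : ℕ, h (m+2) = 2*x*h (m+1) - 2*(m+1)*h m)
    (hpos : ∀ m, m0 ≤ m → 0 < h m) : False := by
  obtain ⟨k, hk⟩ := exists_nat_gt (2*x^2)
  have a := hpos (m0+k) (by omega)
  have b := hpos (m0+k+1) (by omega)
  have c := hpos (m0+k+2) (by omega)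
  have d := hpos (m0+k+3) (by omega)
  have r1 := hr (m0+k)
  have r2 := hr (m0+k+1)
  have hK : 2*x^2 < ((m0+k:ℕ):ℝ) := by push_cast; linarith [Nat.cast_nonneg (α := ℝ) m0]
  generalize m0+k = n at *
  have e : n+1+2 = n+3 := rfl
  have e' : n+1+1 = n+2 := rfl
  rw [e, e'] at r2
  push_cast at r2
  have hn : (0:ℝ) ≤ n := Nat.cast_nonneg n
  have hx : 0 < x := by
    by_contra hx
    push Not at hx
    nlinarith [mul_nonneg (neg_nonneg.2 hx) b.le, mul_nonneg hn a.le]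
  -- c < 2 x b, and x c > (n+2) b
  have h1 : h (n+2) < 2*x*h (n+1) := by nlinarith [mul_nonneg hn a.le]
  have h2 : (n+2) * h (n+1) < x * h (n+2) := by nlinarith
  have h3 : x * h (n+2) < x * (2*x*h (n+1)) := mul_lt_mul_of_pos_left h1 hx
  nlinarith [mul_pos b (sub_pos.2 hK)]

lemma rec_neumann_false (x : ℝ) (h : ℕ → ℝ) (m0 : ℕ)
    (hr : ∀ m : ℕ, h (m+2) = 2*x*h (m+1) - 2*(m+1)*h m)
    (hN : ∀ m, m0 ≤ m → x * h (m+1) < 2*(m+1)*h m) : False := by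
  obtain ⟨k, hk⟩ := exists_nat_gt (2*x^2)
  have hlt : ∀ m, m0 ≤ m → h (m+2) < x*h (m+1) := by
    intro m hm
    have := hr m
    have := hN m hm
    linarith
  have hN2 : ∀ m, m0 ≤ m → -((m+1)*x*h m) < (m+2-x^2)*h (m+1) := by
    intro m hm
    have h1 := hr m
    have h2 := hN (m+1) (by omega)
    rw [show m+1+1 = m+2 from rfl, h1] at h2
    push_cast at h2
    nlinarith
  have hK : ∀ m, m0 + k ≤ m → 2*x^2 < (m:ℝ) := by
    intro m hm
    have : ((m0 + k : ℕ) : ℝ) ≤ m := by exact_mod_cast hm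
    push_cast at this
    linarith [Nat.cast_nonneg (α := ℝ) m0]
  rcases le_or_gt 0 x with hx | hx
  · refine rec_pos_false x h (m0+k+1) hr fun m hm => ?_
    obtain ⟨n, rfl⟩ : ∃ n, m = n+1 := ⟨m-1, by omega⟩
    by_contra hneg
    push Not at hneg
    have h1 := hN2 (n+1) (by omega)
    have h2 := hlt n (by omega)
    rw [show n+1+1 = n+2 from rfl] at h1
    push_cast at h1
    have h3 := hK n (by omega)
    have h4 : x * h (n+1) ≤ 0 := mul_nonpos_of_nonneg_of_nonpos hx hneg
    have h5 : (n+1+1)*x*h (n+1) ≤ 0 := by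
      have : (0:ℝ) ≤ n+1+1 := by positivity
      nlinarith
    have h6 : (n+1+2-x^2)*h (n+2) ≤ 0 := by
      apply mul_nonpos_of_nonneg_of_nonpos
      · nlinarith [sq_nonneg x]
      · linarith
    linarith
  · have hneg : ∀ m, m0+k+1 ≤ m → h m < 0 := by
      intro m hm
      obtain ⟨n, rfl⟩ : ∃ n, m = n+1 := ⟨m-1, by omega⟩
      by_contra hpos
      push Not at hpos
      have h1 := hN2 (n+1) (by omega)
      have h2 := hlt n (by omega)
      rw [show n+1+1 = n+2 from rfl] at h1
      push_cast at h1
      have h3 := hK n (by omega)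
      have h4 : x * h (n+1) ≤ 0 := mul_nonpos_of_nonpos_of_nonneg hx.le hpos
      have h5 : (n+1+1)*x*h (n+1) ≤ 0 := by
        have : (0:ℝ) ≤ n+1+1 := by positivity
        nlinarith
      have h6 : (n+1+2-x^2)*h (n+2) ≤ 0 := by
        apply mul_nonpos_of_nonneg_of_nonpos
        · nlinarith [sq_nonneg x]
        · linarith
      linarith
    have a := hneg (m0+k+1) (by omega)
    have b := hneg (m0+k+1+1) (by omega)
    have c := hneg (m0+k+1+2) (by omega)
    have r := hr (m0+k+1)
    have : (0:ℝ) ≤ ((m0+k+1:ℕ):ℝ) := Nat.cast_nonneg _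
    nlinarith [mul_pos_of_neg_of_neg hx b, mul_nonneg this (neg_nonneg.2 a.le)]

lemma pch_rec (x : ℝ) (m : ℕ) :
    pcg (-((m+2:ℕ):ℝ)) x = 2*x*pcg (-((m+1:ℕ):ℝ)) x - 2*(m+1)*pcg (-((m:ℕ):ℝ)) x := by
  rw [pcg_rec]
  have e1 : -((m+2:ℕ):ℝ) + 1 = -((m+1:ℕ):ℝ) := by push_cast; ring
  have e2 : -((m+2:ℕ):ℝ) + 2 = -((m:ℕ):ℝ) := by push_cast; ring
  rw [e1, e2]; push_cast; ring

/-- Largest zero in `p` of `p ↦ g_p(x₀)`. -/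
lemma exists_pmu (x : ℝ) : ∃ pm : ℝ, pm < 0 ∧ pcg pm x = 0 ∧ ∀ q, pm < q → 0 < pcg q x := by
  have hne : ∃ q, q ≤ 1 ∧ pcg q x = 0 := by
    by_contra hcon
    push Not at hcon
    refine rec_pos_false x (fun m => pcg (-(m:ℝ)) x) 0 (fun m => pch_rec x m) fun m _ => ?_
    by_contra hneg
    push Not at hneg
    have hm : (0:ℝ) ≤ m := Nat.cast_nonneg m
    have hle : -(m:ℝ) ≤ 1 := by linarith
    obtain ⟨q, hq, hq0⟩ := intermediate_value_Icc hle (pcg_cont x).continuousOn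
      (⟨hneg, (pcg_pos one_pos x).le⟩ : (0:ℝ) ∈ Icc _ _)
    exact hcon q hq.2 hq0
  set Z : Set ℝ := {q | pcg q x = 0} with hZ
  have hbd : ∀ q ∈ Z, q ≤ 0 := by
    intro q hq
    by_contra h
    push Not at h
    exact (pcg_pos h x).ne' hq
  have hB : BddAbove Z := ⟨0, hbd⟩
  have hN : Z.Nonempty := by obtain ⟨q, _, hq⟩ := hne; exact ⟨q, hq⟩
  have hC : IsClosed Z := isClosed_eq (pcg_cont x) continuous_const
  have hmem : sSup Z ∈ Z := hC.csSup_mem hN hB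
  have hg0 : 0 < pcg 0 x := by
    have hc : ∀ y z, pcg 0 y = pcg 0 z := by
      refine is_const_of_deriv_eq_zero (fun y => (pcg_deriv 0 y).differentiableAt) fun y => ?_
      rw [(pcg_deriv 0 y).deriv]; ring
    rw [hc x 1, pcg_rec]
    have h1 := pcg_pos (show (0:ℝ) < 0+1 by norm_num) 1
    have h2 := pcg_pos (show (0:ℝ) < 0+2 by norm_num) 1
    linarith
  refine ⟨sSup Z, ?_, hmem, fun q hq => ?_⟩
  · refine lt_of_le_of_ne (hbd _ hmem) fun h => ?_
    rw [h] at hmem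
    exact hg0.ne' hmem
  · by_contra hneg
    push Not at hneg
    have hq0 : q ≤ 0 := by
      by_contra h
      push Not at h
      linarith [pcg_pos h x]
    obtain ⟨r, hr, hr0⟩ := intermediate_value_Icc (show q ≤ 1 by linarith) (pcg_cont x).continuousOn
      (⟨hneg, (pcg_pos one_pos x).le⟩ : (0:ℝ) ∈ Icc _ _)
    have := le_csSup hB (show r ∈ Z from hr0)
    linarith [hr.1]

lemma pcg_pos_all {x0 pm : ℝ} (h : ∀ q, pm < q → 0 < pcg q x0) :
    ∀ q, pm < q → ∀ x, x0 ≤ x → 0 < pcg q x := by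
  have main : ∀ N : ℕ, ∀ q : ℝ, -(N:ℝ) < q → pm < q → ∀ x, x0 ≤ x → 0 < pcg q x := by
    intro N
    induction N with
    | zero => intro q hq _ x _; exact pcg_pos (by simpa using hq) x
    | succ N ih =>
      intro q hq hq2 x hx
      push_cast at hq
      rcases lt_or_ge 0 q with h0 | h0
      · exact pcg_pos h0 x
      have h1 := ih (q+1) (by linarith) (by linarith)
      have hmono : MonotoneOn (pcg q) (Ici x0) := by
        refine monotoneOn_of_deriv_nonneg (convex_Ici _)
          (fun y _ => (pcg_deriv q y).continuousAt.continuousWithinAt)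
          (fun y _ => (pcg_deriv q y).differentiableAt.differentiableWithinAt) fun y hy => ?_
        rw [interior_Ici] at hy
        rw [(pcg_deriv q y).deriv]
        have := h1 y (le_of_lt hy)
        nlinarith [mul_nonneg (neg_nonneg.2 h0) this.le]
      exact (h q hq2).trans_le (hmono self_mem_Ici hx hx)
  intro q hq
  obtain ⟨N, hN⟩ := pc_exists_n q
  exact main N q hN hq

/-- Picone / ground state: a positive Neumann solution bounds the form from below. -/
lemma picone (ξ p : ℝ) (hp : ∀ q, p ≤ q → ∀ x, -ξ ≤ x → 0 < pcg q x) (hN : pcψd ξ p 0 = 0)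
    {v : ℝ → ℝ} (hv : MemB1p v) : 0 ≤ qRobin 0 ξ v - (1-2*p) * np v := by
  rw [q_sub hv]
  set F : ℝ → ℝ := fun t => (deriv v t)^2 + (t-ξ)^2 * (v t)^2 - (1-2*p) * (v t)^2 with hF
  have hFint : IntegrableOn F (Ioi 0) := (memB1p_e hv ξ).sub (hv.2.1.const_mul (1-2*p))
  have hpos : ∀ t, 0 ≤ t → 0 < pcψ ξ p t := fun t ht =>
    mul_pos (Real.exp_pos _) (hp p le_rfl _ (by linarith))
  set w : ℝ → ℝ := fun t => pcψd ξ p t / pcψ ξ p t with hw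
  have hwd : ∀ t, 0 ≤ t → HasDerivAt w ((t-ξ)^2 - (1-2*p) - (w t)^2) t := by
    intro t ht
    have hne := (hpos t ht).ne'
    refine ((pcψd_deriv ξ p t).div (pcψ_deriv ξ p t) hne).congr_deriv ?_
    simp only [hw]
    field_simp
  have hvd : ∀ t, HasDerivAt v (deriv v t) t := fun t => (hv.1 t).hasDerivAt
  have hgd : ∀ t, 0 ≤ t → HasDerivAt (fun t => w t * (v t)^2)
      (((t-ξ)^2 - (1-2*p) - (w t)^2) * (v t)^2 + w t * (2 * v t * deriv v t)) t := by
    intro t ht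
    refine ((hwd t ht).mul ((hvd t).pow 2)).congr_deriv ?_
    simp
  have hle : ∀ T, 0 ≤ T → w T * (v T)^2 ≤ ∫ t in (0:ℝ)..T, F t := by
    intro T hT
    have := intervalIntegral.sub_le_integral_of_hasDeriv_right_of_le hT
      (g := fun t => w t * (v t)^2) (φ := F)
      (fun t ht => (hgd t ht.1).continuousAt.continuousWithinAt)
      (fun t ht => (hgd t ht.1.le).hasDerivWithinAt)
      (((integrableOn_Ici_iff_integrableOn_Ioi (by finiteness)).2 hFint).mono_set Icc_subset_Ici_self)
      (fun t ht => by
        simp only [hF]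
        nlinarith [sq_nonneg (deriv v t - w t * v t)])
    have h0 : w 0 = 0 := by simp [hw, hN]
    simpa [h0] using this
  have hwb : ∀ t, |ξ|+1 ≤ t → -(2 + |p|) * ((t-ξ)^2) ≤ w t := by
    intro t ht
    have hx1 : 1 ≤ t - ξ := by linarith [le_abs_self ξ]
    have hx0 : -ξ ≤ t - ξ := by linarith [abs_nonneg ξ]
    have g0 := hp p le_rfl _ hx0
    have g1 := hp (p+1) (by linarith) _ hx0
    have g2 := hp (p+2) (by linarith) _ hx0
    have hwe : w t = (-(t-ξ) * pcg p (t-ξ) - 2*p*pcg (p+1) (t-ξ)) / pcg p (t-ξ) := by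
      simp only [hw, pcψd, pcψ]
      rw [mul_div_mul_left _ _ (Real.exp_pos _).ne']
    rw [hwe, le_div_iff₀ g0]
    have hr := pcg_rec p (t-ξ)
    have hxx : (t-ξ) ≤ (t-ξ)^2 := by nlinarith
    have hb : 2*p*pcg (p+1) (t-ξ) ≤ |p| * pcg p (t-ξ) := by
      rcases le_or_gt p 0 with h | h
      · have : 0 ≤ |p| * pcg p (t-ξ) := by positivity
        nlinarith [mul_nonneg (neg_nonneg.2 h) g1.le]
      · rw [abs_of_pos h]
        have h1 : 2*pcg (p+1) (t-ξ) ≤ pcg p (t-ξ) := by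
          have : 0 < 2*(p+1)*pcg (p+2) (t-ξ) := by positivity
          nlinarith [mul_nonneg (sub_nonneg.2 hx1) g1.le]
        nlinarith
    have hb2 : |p| * pcg p (t-ξ) ≤ |p| * (t-ξ)^2 * pcg p (t-ξ) := by
      have : |p| * 1 ≤ |p| * (t-ξ)^2 := by gcongr; linarith
      nlinarith
    nlinarith [mul_nonneg (sub_nonneg.2 hxx) g0.le, mul_nonneg (sq_nonneg (t-ξ)) g0.le]
  by_contra hneg
  push Not at hneg
  have hlim := intervalIntegral_tendsto_integral_Ioi 0 hFint tendsto_id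
  set L := ∫ t in Ioi (0:ℝ), F t with hL
  have hev : ∀ᶠ T in atTop, (∫ t in (0:ℝ)..T, F t) < L/2 :=
    hlim.eventually_lt_const (by linarith)
  have hev2 : ∀ᶠ T in atTop, -(L/2) ≤ (2+|p|) * ((T-ξ)^2 * (v T)^2) := by
    filter_upwards [hev, eventually_ge_atTop 0, eventually_ge_atTop (|ξ|+1)] with T h1 h2 h3
    have := hle T h2
    have := mul_le_mul_of_nonneg_right (hwb T h3) (sq_nonneg (v T))
    linarith
  obtain ⟨T0, hT0⟩ := eventually_atTop.1 hev2
  have hi : IntegrableOn (fun T => (2+|p|) * ((T-ξ)^2 * (v T)^2)) (Ioi (max T0 0)) :=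
    IntegrableOn.mono_set ((memB1p_V hv ξ).const_mul _) (Ioi_subset_Ioi (le_max_right _ _))
  have hc : IntegrableOn (fun _ : ℝ => -(L/2)) (Ioi (max T0 0)) := by
    refine Integrable.mono' hi aestronglyMeasurable_const ?_
    refine (ae_restrict_iff' measurableSet_Ioi).2 (Eventually.of_forall fun s hs => ?_)
    rw [Real.norm_of_nonneg (by linarith)]
    exact hT0 s ((le_max_left _ _).trans (le_of_lt hs))
  rw [integrableOn_const_iff] at hc
  simp at hc
  linarith

/-- Neumann eigenvalues are zeros of the derivative of the decaying solution. -/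
lemma neumann_zero (ξ p : ℝ) (h : IsNeumannEigenvalue ξ (1-2*p)) : pcψd ξ p 0 = 0 := by
  obtain ⟨u, hu, hnp, hu0, hode⟩ := h
  have huc := hu.1.continuous
  set V : ℝ → ℝ := fun t => (t-ξ)^2 - (1-2*p) with hV
  have hVu : Continuous (fun t => V t * u t) := by simp only [hV]; fun_prop
  set P : ℝ → ℝ := fun t => ∫ s in (0:ℝ)..t, V s * u s with hP
  have hPd : ∀ t, HasDerivAt P (V t * u t) t := fun t =>
    intervalIntegral.integral_hasDerivAt_right (hVu.intervalIntegrable _ _)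
      (hVu.stronglyMeasurableAtFilter _ _) hVu.continuousAt
  have hPc : Continuous P := continuous_iff_continuousAt.2 fun t => (hPd t).continuousAt
  have hP0 : P 0 = 0 := by simp [hP]
  have hconst : ∀ {f : ℝ → ℝ}, (∀ t, 0 < t → HasDerivAt f 0 t) → ∀ t, 0 < t → f t = f 1 := by
    intro f hf t ht
    refine IsOpen.is_const_of_deriv_eq_zero isOpen_Ioi isPreconnected_Ioi
      (fun s hs => (hf s hs).differentiableAt.differentiableWithinAt) (fun s hs => (hf s hs).deriv)
      (show t ∈ Ioi (0:ℝ) from ht) (show (1:ℝ) ∈ Ioi (0:ℝ) from mem_Ioi.2 one_pos)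
  have hd1 : ∀ t, 0 < t → deriv u t = P t + (deriv u 1 - P 1) := by
    intro t ht
    have := hconst (f := fun t => deriv u t - P t)
      (fun t ht => ((hode t ht).sub (hPd t)).congr_deriv (by simp [hV])) t ht
    linarith
  set c := deriv u 1 - P 1 with hc
  have hlim : Tendsto (deriv u) (𝓝[>] 0) (𝓝 c) := by
    have h1 : Tendsto (fun t => P t + c) (𝓝[>] 0) (𝓝 (P 0 + c)) :=
      ((hPc.add continuous_const).tendsto 0).mono_left nhdsWithin_le_nhds
    rw [hP0, zero_add] at h1
    refine h1.congr' ?_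
    filter_upwards [self_mem_nhdsWithin] with t ht
    exact (hd1 t ht).symm
  have hc0 : c = 0 := by
    have h1 := hasDerivWithinAt_Ici_of_tendsto_deriv (s := Ioi (0:ℝ)) (a := 0) (f := u) (e := c)
      hu.1.differentiableOn huc.continuousWithinAt self_mem_nhdsWithin hlim
    have h2 : HasDerivWithinAt u (deriv u 0) (Ici 0) 0 := ((hu.1 0).hasDerivAt).hasDerivWithinAt
    have := (uniqueDiffWithinAt_Ici (0:ℝ)).eq_deriv _ h1 h2
    rw [this, hu0]
  have hd2 : ∀ t, 0 ≤ t → deriv u t = P t := by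
    intro t ht
    rcases ht.eq_or_lt with h | h
    · rw [← h, hu0, hP0]
    · rw [hd1 t h, hc0, add_zero]
  -- Wronskian
  have hW : ∀ t, 0 < t → P t * pcψ ξ p t - u t * pcψd ξ p t = P 1 * pcψ ξ p 1 - u 1 * pcψd ξ p 1 := by
    intro t ht
    refine hconst (f := fun t => P t * pcψ ξ p t - u t * pcψd ξ p t) (fun s hs => ?_) t ht
    have h1 : HasDerivAt u (P s) s := by
      rw [← hd2 s hs.le]; exact (hu.1 s).hasDerivAt
    refine (((hPd s).mul (pcψ_deriv ξ p s)).sub (h1.mul (pcψd_deriv ξ p s))).congr_deriv ?_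
    simp only [hV]; ring
  set k := P 1 * pcψ ξ p 1 - u 1 * pcψd ξ p 1 with hk
  have hψ := pcψ_mem ξ p
  have hk0 : k = 0 := by
    have hb : IntegrableOn (fun t => ((deriv u t)^2 + (pcψ ξ p t)^2) +
        ((u t)^2 + (deriv (pcψ ξ p) t)^2)) (Ioi 0) :=
      (hu.2.2.1.add hψ.2.1).add (hu.2.1.add hψ.2.2.1)
    have hi : IntegrableOn (fun _ : ℝ => k) (Ioi 0) := by
      refine Integrable.mono' hb aestronglyMeasurable_const ?_
      refine (ae_restrict_iff' measurableSet_Ioi).2 (Eventually.of_forall fun t ht => ?_)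
      have ht' : (0:ℝ) < t := ht
      rw [← hW t ht, hd2 t ht'.le, pcψ_deriv_eq, Real.norm_eq_abs, abs_le]
      constructor
      · nlinarith [sq_nonneg (P t + pcψ ξ p t), sq_nonneg (u t - pcψd ξ p t),
          sq_nonneg (P t), sq_nonneg (pcψ ξ p t), sq_nonneg (u t), sq_nonneg (pcψd ξ p t)]
      · nlinarith [sq_nonneg (P t - pcψ ξ p t), sq_nonneg (u t + pcψd ξ p t),
          sq_nonneg (P t), sq_nonneg (pcψ ξ p t), sq_nonneg (u t), sq_nonneg (pcψd ξ p t)]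
    rw [integrableOn_const_iff] at hi
    simpa using hi
  have hW0 : u 0 * pcψd ξ p 0 = 0 := by
    have hcont : Continuous (fun t => P t * pcψ ξ p t - u t * pcψd ξ p t) := by
      have := pcψ_cont ξ p
      have := pcψd_cont ξ p
      fun_prop
    have h1 : Tendsto (fun t => P t * pcψ ξ p t - u t * pcψd ξ p t) (𝓝[>] 0)
        (𝓝 (P 0 * pcψ ξ p 0 - u 0 * pcψd ξ p 0)) :=
      (hcont.tendsto 0).mono_left nhdsWithin_le_nhds
    have h2 : Tendsto (fun t => P t * pcψ ξ p t - u t * pcψd ξ p t) (𝓝[>] 0) (𝓝 0) := by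
      refine tendsto_const_nhds.congr' ?_
      filter_upwards [self_mem_nhdsWithin] with t ht
      rw [hW t ht, hk0]
    have := tendsto_nhds_unique h1 h2
    rw [hP0] at this
    linarith
  refine (mul_eq_zero.1 hW0).resolve_left fun hz => hnp ?_
  -- Gronwall
  have huz : ∀ T, 0 < T → u T = 0 := by
    intro T hT
    obtain ⟨K, hK⟩ : ∃ K, ∀ t ∈ Icc 0 T, |1 + V t| ≤ K := by
      have hc : ContinuousOn (fun t => 1 + V t) (Icc 0 T) := by
        simp only [hV]; fun_prop
      obtain ⟨K, hK⟩ := isCompact_Icc.exists_bound_of_continuousOn hc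
      exact ⟨K, fun t ht => hK t ht⟩
    set E : ℝ → ℝ := fun t => ((u t)^2 + (P t)^2) * Real.exp (-K*t) with hE
    have hEd : ∀ t, 0 < t → HasDerivAt E
        ((2 * (1 + V t) * (u t * P t) - K * ((u t)^2 + (P t)^2)) * Real.exp (-K*t)) t := by
      intro t ht
      have h1 : HasDerivAt u (P t) t := by
        rw [← hd2 t ht.le]; exact (hu.1 t).hasDerivAt
      have h2 : HasDerivAt (fun t : ℝ => Real.exp (-K*t)) (Real.exp (-K*t) * (-K)) t := by
        have := ((hasDerivAt_id t).const_mul (-K)).exp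
        simpa using this
      refine (((h1.pow 2).add ((hPd t).pow 2)).mul h2).congr_deriv ?_
      simp
      ring
    have hanti : AntitoneOn E (Icc 0 T) := by
      refine antitoneOn_of_deriv_nonpos (convex_Icc _ _) ?_ ?_ ?_
      · simp only [hE]; fun_prop
      · intro t ht
        rw [interior_Icc] at ht
        exact (hEd t ht.1).differentiableAt.differentiableWithinAt
      · intro t ht
        rw [interior_Icc] at ht
        rw [(hEd t ht.1).deriv]
        refine mul_nonpos_of_nonpos_of_nonneg ?_ (Real.exp_pos _).le
        have hKt := abs_le.1 (hK t ⟨ht.1.le, ht.2.le⟩)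
        have hm := mul_nonneg (sub_nonneg.2 hKt.2) (sq_nonneg (u t + P t))
        have hm2 := mul_nonneg (by linarith [hKt.1] : 0 ≤ K + (1 + V t)) (sq_nonneg (u t - P t))
        nlinarith
    have := hanti ⟨le_rfl, hT.le⟩ ⟨hT.le, le_rfl⟩ hT.le
    simp only [hE, hz, hP0] at this
    have h3 : 0 < Real.exp (-K*T) := Real.exp_pos _
    have h4 : (u T)^2 + (P T)^2 ≤ 0 := by
      by_contra hh
      push Not at hh
      have := mul_pos hh h3
      norm_num at *
      linarith
    have h5 : (u T)^2 = 0 := by nlinarith [sq_nonneg (u T), sq_nonneg (P T)]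
    exact pow_eq_zero_iff two_ne_zero |>.1 h5
  unfold np
  rw [setIntegral_congr_fun measurableSet_Ioi (g := fun _ => (0:ℝ))
    (fun t ht => by simp [huz t ht])]
  simp

/-- `λ₂^N(ξ) > λ₁^D(ξ)` for every `ξ`. -/
theorem secondNeumann_gt_firstDirichlet (ξ : ℝ) : lambda1D ξ < lambda2N ξ := by
  obtain ⟨pm, hpm0, hpmz, hpos0⟩ := exists_pmu (-ξ)
  have hpos := pcg_pos_all hpos0
  have hφ0 : pcψ ξ pm 0 = 0 := by simp [pcψ, hpmz]
  have hq := pcψ_q ξ pm (by rw [hφ0, zero_mul])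
  have hnp := pc_np_ne ξ pm
  have hquot : (1-2*pm) = qRobin 0 ξ (pcψ ξ pm) / np (pcψ ξ pm) := by
    rw [eq_div_iff hnp]; linarith
  have hDle : lambda1D ξ ≤ 1-2*pm := by
    refine csInf_le ⟨0, ?_⟩ ⟨pcψ ξ pm, pcψ_mem ξ pm, hφ0, hnp, hquot⟩
    rintro r ⟨u, _, _, _, rfl⟩
    exact div_nonneg (q_nonneg ξ u) (np_nonneg u)
  have hNle : lambda1N ξ ≤ 1-2*pm := by
    refine csInf_le ⟨0, ?_⟩ ⟨pcψ ξ pm, pcψ_mem ξ pm, hnp, hquot⟩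
    rintro r ⟨u, _, _, rfl⟩
    exact div_nonneg (q_nonneg ξ u) (np_nonneg u)
  -- the Neumann function
  set Nf : ℝ → ℝ := fun p => ξ * pcg p (-ξ) - 2*p*pcg (p+1) (-ξ) with hNf
  have hNc : Continuous Nf := by
    have h1 := pcg_cont (-ξ)
    have h2 : Continuous (fun p => pcg (p+1) (-ξ)) := h1.comp (by fun_prop : Continuous fun p : ℝ => p+1)
    simp only [hNf]; fun_prop
  have hNψ : ∀ p, pcψd ξ p 0 = Real.exp (-(0-ξ)^2/2) * Nf p := by
    intro p; simp only [pcψd, hNf, zero_sub, neg_neg]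
  have hNiff : ∀ p, pcψd ξ p 0 = 0 ↔ Nf p = 0 := by
    intro p; rw [hNψ, mul_eq_zero]; simp [(Real.exp_pos _).ne']
  have hNpm : 0 < Nf pm := by
    simp only [hNf, hpmz]
    have := hpos0 (pm+1) (by linarith)
    nlinarith [mul_pos (neg_pos.2 hpm0) this]
  obtain ⟨δ, hδ, hδN⟩ : ∃ δ > 0, ∀ q, pm - δ < q → q ≤ pm → 0 < Nf q := by
    obtain ⟨δ, hδ, h⟩ := Metric.eventually_nhds_iff.1 (hNc.continuousAt.eventually_const_lt hNpm)
    refine ⟨δ, hδ, fun q h1 h2 => h ?_⟩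
    rw [Real.dist_eq, abs_lt]
    constructor <;> linarith
  -- existence of a Neumann eigenvalue above
  have hex : ∃ q, q < pm ∧ Nf q = 0 := by
    by_contra hcon
    push Not at hcon
    have hNpos : ∀ q, q ≤ pm → 0 < Nf q := by
      intro q hq
      by_contra hneg
      push Not at hneg
      obtain ⟨r, hr, hr0⟩ := intermediate_value_Icc hq hNc.continuousOn
        (⟨hneg, hNpm.le⟩ : (0:ℝ) ∈ Icc _ _)
      rcases hr.2.eq_or_lt with h | h
      · rw [h] at hr0; linarith
      · exact hcon r h hr0
    obtain ⟨m0, hm0⟩ := exists_nat_gt (-pm)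
    refine rec_neumann_false (-ξ) (fun m => pcg (-(m:ℝ)) (-ξ)) m0 (fun m => pch_rec (-ξ) m) ?_
    intro m hm
    have hm' : (m0:ℝ) ≤ m := by exact_mod_cast hm
    have := hNpos (-((m+1:ℕ):ℝ)) (by push_cast; linarith)
    simp only [hNf] at this
    rw [show -((m+1:ℕ):ℝ) + 1 = -(m:ℝ) by push_cast; ring] at this
    push_cast at this ⊢
    linarith
  have hlow : 1-2*pm + 2*δ ≤ lambda2N ξ := by
    refine le_csInf ?_ ?_
    · obtain ⟨q, hq, hq0⟩ := hex
      refine ⟨1-2*q, ⟨pcψ ξ q, pcψ_mem ξ q, pc_np_ne ξ q, ?_, ?_⟩, by linarith⟩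
      · rw [pcψ_deriv_eq]; exact (hNiff q).2 hq0
      · intro t _
        rw [pcψ_deriv_eq]; exact pcψd_deriv ξ q t
    · rintro lam ⟨hlam, hlt⟩
      obtain ⟨p, rfl⟩ : ∃ p, lam = 1-2*p := ⟨(1-lam)/2, by ring⟩
      have hz := neumann_zero ξ p hlam
      by_contra hcon
      push Not at hcon
      rcases le_or_gt p pm with h | h
      · have := hδN p (by linarith) h
        exact this.ne' ((hNiff p).1 hz)
      · refine absurd hlt (not_lt.2 ?_)
        refine le_csInf ⟨_, pcψ ξ pm, pcψ_mem ξ pm, hnp, rfl⟩ ?_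
        rintro r ⟨v, hv, hvn, rfl⟩
        have hvpos : 0 < np v := lt_of_le_of_ne (np_nonneg v) (Ne.symm hvn)
        rw [le_div_iff₀ hvpos]
        have := picone ξ p (fun q hq => hpos q (by linarith)) hz hv
        linarith
  linarith
end
end

section
/- With μ₁(a,m,α;ξ) defined as the ground state energy of the quadratic form Q[a,m,α;ξ] on B¹(ℝ), one has lim_{ξ→-∞} μ₁(a,m,α;ξ) = 1/m + aα and lim_{ξ→+∞} μ₁(a,m,α;ξ) = 1 - α, for all a, m, α > 0. -/
open MeasureTheory Set Filter Topology

noncomputable section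

/-- General two-sided form. -/
def GG (p q r s ξ : ℝ) (u : ℝ → ℝ) : ℝ :=
  (∫ t in Ioi (0:ℝ), (p * ((deriv u t)^2 + (t - ξ)^2 * (u t)^2) + q * (u t)^2)) +
  ∫ t in Iio (0:ℝ), (r * ((deriv u t)^2 + (t - ξ)^2 * (u t)^2) + s * (u t)^2)

/-- Set of Rayleigh quotients of the general form. -/
def GS (p q r s ξ : ℝ) : Set ℝ :=
  {x : ℝ | ∃ u : ℝ → ℝ, MemB1 u ∧ nR u ≠ 0 ∧ x = GG p q r s ξ u / nR u}

lemma int_shift (ξ : ℝ) {u : ℝ → ℝ} (hu : MemB1 u) :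
    Integrable (fun t => (t - ξ)^2 * (u t)^2) := by
  obtain ⟨hd, h0, h1, h2⟩ := hu
  have hc := hd.continuous
  refine ((h2.const_mul 2).add (h0.const_mul (2 * ξ^2))).mono'
    (by fun_prop) (Eventually.of_forall fun t => ?_)
  rw [Real.norm_of_nonneg (by positivity)]
  simp only [Pi.add_apply]
  nlinarith [mul_nonneg (sq_nonneg (t + ξ)) (sq_nonneg (u t))]

lemma pointwise_h (ξ t s d : ℝ) (hξ : 5 ≤ ξ) (ht : 0 < t) (hs : s = t - ξ) (hd : d = 8 / ξ) :
    0 ≤ s^2 + (s / (t+1)^2 + t / (t+1)) - (s * (t / (t+1)))^2 - (1 - d) := by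
  have h1 : 0 < t + 1 := by linarith
  have key : 0 ≤ s^2 * (2*t+1) - ξ - 1 + d * (t+1)^2 := by
    have hd0 : 0 ≤ d := by rw [hd]; positivity
    have hdξ : d * ξ = 8 := by rw [hd]; field_simp
    rcases le_total t (ξ/2) with h | h
    · have : ξ^2/4 ≤ s^2 := by subst hs; nlinarith
      nlinarith [mul_nonneg (sq_nonneg s) ht.le, mul_nonneg hd0 (sq_nonneg (t+1))]
    · have h2 : ξ^2/4 ≤ (t+1)^2 := by nlinarith
      have h3 := mul_le_mul_of_nonneg_left h2 hd0
      have h4 : d * (ξ^2/4) = 2 * ξ := by linear_combination (ξ/4) * hdξ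
      have : 0 ≤ s^2 * (2*t+1) := by positivity
      linarith
  have : s^2 + (s / (t+1)^2 + t / (t+1)) - (s * (t / (t+1)))^2 - (1 - d)
      = (s^2 * (2*t+1) - ξ - 1 + d * (t+1)^2) / (t+1)^2 := by
    field_simp
    subst hs
    ring
  rw [this]
  positivity

lemma half_lower (ξ : ℝ) (hξ : 5 ≤ ξ) {u : ℝ → ℝ} (hu : MemB1 u) :
    (1 - 8/ξ) * ∫ t in Ioi (0:ℝ), (u t)^2 ≤
      ∫ t in Ioi (0:ℝ), ((deriv u t)^2 + (t - ξ)^2 * (u t)^2) := by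
  have hs := int_shift ξ hu
  obtain ⟨hd, h0, h1, h2⟩ := hu
  have hc := hd.continuous
  have hm : Measurable (deriv u) := measurable_deriv u
  set g : ℝ → ℝ := fun t => (t - ξ) * (t / (t+1)) with hg
  set g' : ℝ → ℝ := fun t => (t - ξ) / (t+1)^2 + t/(t+1) with hg'
  have hder : ∀ t ∈ Ici (0:ℝ), HasDerivAt (fun t => g t * (u t)^2)
      (g' t * (u t)^2 + g t * (2 * u t * deriv u t)) t := by
    intro t ht
    have ht : (0:ℝ) ≤ t := ht
    have hne : t + 1 ≠ 0 := by positivity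
    have e1 : HasDerivAt g (g' t) t := by
      have := ((hasDerivAt_id t).sub_const ξ).mul
        ((hasDerivAt_id t).div ((hasDerivAt_id t).add_const 1) hne)
      refine this.congr_deriv ?_
      simp only [hg', id, Pi.div_apply]
      field_simp
      ring
    have e2 : HasDerivAt (fun t => (u t)^2) (2 * u t * deriv u t) t := by
      have := (hd t).hasDerivAt.pow 2
      refine this.congr_deriv ?_
      simp
    exact e1.mul e2
  have hgm : Measurable g := by fun_prop
  have hgm' : Measurable g' := by fun_prop
  have hum : Measurable u := hc.measurable
  have hφ : ∀ t ∈ Ioi (0:ℝ), 0 ≤ t/(t+1) ∧ t/(t+1) ≤ 1 := by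
    intro t ht
    have ht : (0:ℝ) < t := ht
    exact ⟨by positivity, by rw [div_le_one (by positivity)]; linarith⟩
  have hg2 : ∀ t ∈ Ioi (0:ℝ), (g t)^2 ≤ (t - ξ)^2 := by
    intro t ht
    obtain ⟨a1, a2⟩ := hφ t ht
    simp only [hg, mul_pow]
    have : (t/(t+1))^2 ≤ 1 := by nlinarith
    nlinarith [sq_nonneg (t - ξ)]
  have hgb : ∀ t ∈ Ioi (0:ℝ), |g' t| ≤ (t - ξ)^2 + 2 := by
    intro t ht
    obtain ⟨a1, a2⟩ := hφ t ht
    have ht : (0:ℝ) < t := ht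
    have b1 : |(t - ξ) / (t+1)^2| ≤ |t - ξ| := by
      rw [abs_div]
      apply div_le_self (abs_nonneg _)
      rw [abs_of_nonneg (by positivity)]
      nlinarith
    have b2 : |t - ξ| ≤ (t-ξ)^2 + 1 := by
      rw [← sq_abs]; nlinarith [sq_nonneg (|t-ξ| - 1), abs_nonneg (t-ξ)]
    calc |g' t| ≤ |(t - ξ) / (t+1)^2| + |t/(t+1)| := abs_add_le _ _
      _ ≤ _ := by rw [abs_of_nonneg a1]; linarith
  have i1 : IntegrableOn (fun t => g t * (u t)^2) (Ioi 0) := by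
    refine Integrable.mono' (hs.add h0).integrableOn (by fun_prop) ?_
    refine (ae_restrict_iff' measurableSet_Ioi).2 (Eventually.of_forall fun t ht => ?_)
    have := hg2 t ht
    rw [norm_mul, Real.norm_eq_abs, Real.norm_of_nonneg (sq_nonneg _)]
    simp only [Pi.add_apply]
    have : |g t| ≤ (t-ξ)^2 + 1 := by
      rw [← sq_abs] at this; nlinarith [sq_nonneg (|g t| - 1), abs_nonneg (g t)]
    nlinarith [sq_nonneg (u t)]
  have i2 : IntegrableOn (fun t => g' t * (u t)^2 + g t * (2 * u t * deriv u t)) (Ioi 0) := by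
    refine Integrable.mono' (((hs.const_mul 2).add (h0.const_mul 2)).add h1).integrableOn
      (by fun_prop) ?_
    refine (ae_restrict_iff' measurableSet_Ioi).2 (Eventually.of_forall fun t ht => ?_)
    have e1 := hg2 t ht
    have e2 := hgb t ht
    simp only [Pi.add_apply]
    have f1 : ‖g' t * (u t)^2‖ ≤ ((t - ξ)^2 + 2) * (u t)^2 := by
      rw [norm_mul, Real.norm_eq_abs, Real.norm_of_nonneg (sq_nonneg _)]
      exact mul_le_mul_of_nonneg_right e2 (sq_nonneg _)
    have f3 : (g t)^2 * (u t)^2 ≤ (t-ξ)^2 * (u t)^2 := mul_le_mul_of_nonneg_right e1 (sq_nonneg _)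
    have f2 : ‖g t * (2 * u t * deriv u t)‖ ≤ (t-ξ)^2 * (u t)^2 + (deriv u t)^2 := by
      rw [Real.norm_eq_abs, abs_le]
      constructor
      · nlinarith [sq_nonneg (g t * u t + deriv u t)]
      · nlinarith [sq_nonneg (g t * u t - deriv u t)]
    refine (norm_add_le _ _).trans ?_
    linarith
  have hz : ∫ t in Ioi (0:ℝ), (g' t * (u t)^2 + g t * (2 * u t * deriv u t)) = 0 := by
    have ht := tendsto_zero_of_hasDerivAt_of_integrableOn_Ioi
      (fun x hx => hder x (Ioi_subset_Ici_self hx)) i2 i1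
    rw [integral_Ioi_of_hasDerivAt_of_tendsto' hder i2 ht]
    simp [hg]
  have hF : IntegrableOn (fun t => (deriv u t)^2 + (t - ξ)^2 * (u t)^2) (Ioi 0) :=
    (h1.add hs).integrableOn
  rw [← integral_const_mul]
  have : ∫ t in Ioi (0:ℝ), (1 - 8/ξ) * (u t)^2 ≤
      ∫ t in Ioi (0:ℝ), (((deriv u t)^2 + (t - ξ)^2 * (u t)^2)
        + (g' t * (u t)^2 + g t * (2 * u t * deriv u t))) := by
    refine setIntegral_mono_on (h0.const_mul _).integrableOn (hF.add i2) measurableSet_Ioi ?_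
    intro t ht
    have hp := pointwise_h ξ t (t-ξ) (8/ξ) hξ ht rfl rfl
    have hp2 : 0 ≤ ((t-ξ)^2 + g' t - (g t)^2 - (1 - 8/ξ)) * (u t)^2 :=
      mul_nonneg hp (sq_nonneg _)
    nlinarith [sq_nonneg (deriv u t + g t * u t)]
  rw [integral_add hF i2, hz, add_zero] at this
  exact this

lemma nR_split {u : ℝ → ℝ} (hu : Integrable u) :
    (∫ t in Ioi (0:ℝ), u t) + (∫ t in Iio (0:ℝ), u t) = ∫ t, u t := by
  rw [← integral_Iic_eq_integral_Iio, add_comm]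
  exact intervalIntegral.integral_Iic_add_Ioi hu.integrableOn hu.integrableOn

lemma GG_lower (p q r s ξ : ℝ) (hp : 0 < p) (hr : 0 < r) (hξ : 5 ≤ ξ)
    (hξ2 : p + q ≤ r * ξ^2 + s) {u : ℝ → ℝ} (hu : MemB1 u) :
    (p * (1 - 8/ξ) + q) * nR u ≤ GG p q r s ξ u := by
  have hl := half_lower ξ hξ hu
  have hs := int_shift ξ hu
  obtain ⟨hd, h0, h1, h2⟩ := hu
  have hK : Integrable (fun t => (deriv u t)^2 + (t - ξ)^2 * (u t)^2) := h1.add hs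
  unfold GG nR
  rw [← nR_split h0, mul_add]
  refine add_le_add ?_ ?_
  · rw [integral_add (hK.const_mul p).integrableOn (h0.const_mul q).integrableOn,
      integral_const_mul, integral_const_mul]
    nlinarith
  · rw [← integral_const_mul]
    refine setIntegral_mono_on (h0.const_mul _).integrableOn
      ((hK.const_mul r).add (h0.const_mul s)).integrableOn measurableSet_Iio ?_
    intro t ht
    have ht : t < 0 := ht
    have e1 : ξ^2 ≤ (t-ξ)^2 := by nlinarith
    have e2 : p * (1 - 8/ξ) + q ≤ r * (t-ξ)^2 + s := by
      have : 0 ≤ p * (8/ξ) := by positivity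
      nlinarith
    have e3 := mul_le_mul_of_nonneg_right e2 (sq_nonneg (u t))
    have : 0 ≤ r * (deriv u t)^2 := by positivity
    nlinarith

lemma gauss_int : Integrable (fun x : ℝ => Real.exp (-x^2)) := by
  simpa using integrable_exp_neg_mul_sq (b := 1) one_pos

lemma gauss_int2 : Integrable (fun x : ℝ => x^2 * Real.exp (-x^2)) := by
  have := integrable_rpow_mul_exp_neg_mul_sq (b := 1) one_pos (s := 2) (by norm_num)
  simpa using this

lemma gauss_int1 : Integrable (fun x : ℝ => x * Real.exp (-x^2)) := by
  simpa using integrable_mul_exp_neg_mul_sq (b := 1) one_pos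

lemma gauss_moment : ∫ x : ℝ, 2 * (x^2 * Real.exp (-x^2)) = ∫ x : ℝ, Real.exp (-x^2) := by
  have h : ∫ x : ℝ, (Real.exp (-x^2) - 2 * (x^2 * Real.exp (-x^2))) = 0 := by
    refine integral_eq_zero_of_hasDerivAt_of_integrable (f := fun x => x * Real.exp (-x^2))
      (fun x => ?_) (gauss_int.sub (gauss_int2.const_mul 2)) gauss_int1
    have := (hasDerivAt_id x).mul (((hasDerivAt_id x).pow 2).neg.exp)
    refine this.congr_deriv ?_
    simp
    ring
  rw [integral_sub gauss_int (gauss_int2.const_mul 2)] at h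
  linarith

lemma gauss_pos : 0 < ∫ x : ℝ, Real.exp (-x^2) := by
  have := integral_gaussian 1
  simp only [neg_mul, one_mul, div_one] at this
  rw [this]
  positivity

/-- Translated Gaussian. -/
def gs (ξ t : ℝ) : ℝ := Real.exp (-(t-ξ)^2/2)

lemma gs_sq (ξ t : ℝ) : (gs ξ t)^2 = Real.exp (-(t-ξ)^2) := by
  rw [gs, ← Real.exp_nat_mul]
  congr 1
  push_cast
  ring

lemma gs_hasDeriv (ξ t : ℝ) : HasDerivAt (gs ξ) (-(t-ξ) * gs ξ t) t := by
  have := (((((hasDerivAt_id t).sub_const ξ).pow 2).neg).div_const 2).exp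
  refine this.congr_deriv ?_
  simp [gs]
  ring

lemma gs_deriv_sq (ξ t : ℝ) : (deriv (gs ξ) t)^2 = (t-ξ)^2 * Real.exp (-(t-ξ)^2) := by
  rw [(gs_hasDeriv ξ t).deriv, mul_pow, gs_sq, neg_sq]

lemma gs_mem (ξ : ℝ) : MemB1 (gs ξ) := by
  have hi0 := gauss_int.comp_sub_right ξ
  have hi2 := gauss_int2.comp_sub_right ξ
  refine ⟨fun t => (gs_hasDeriv ξ t).differentiableAt, ?_, ?_, ?_⟩
  · simpa only [gs_sq] using hi0
  · simpa only [gs_deriv_sq] using hi2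
  · simp only [gs_sq]
    refine ((hi2.const_mul 2).add (hi0.const_mul (2*ξ^2))).mono' (by fun_prop)
      (Eventually.of_forall fun t => ?_)
    rw [Real.norm_of_nonneg (by positivity)]
    simp only [Pi.add_apply]
    nlinarith [mul_nonneg (sq_nonneg (t - 2*ξ)) (Real.exp_pos (-(t-ξ)^2)).le]

lemma gs_nR (ξ : ℝ) : nR (gs ξ) = ∫ x : ℝ, Real.exp (-x^2) := by
  simp only [nR, gs_sq]
  exact integral_sub_right_eq_self (fun x : ℝ => Real.exp (-x^2)) ξ

lemma tail_pos {F : ℝ → ℝ} (hF : Integrable F) :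
    Tendsto (fun ξ : ℝ => ∫ t in Ioi (0:ℝ), F (t - ξ)) atTop (𝓝 (∫ t, F t)) := by
  have e : ∀ ξ : ℝ, ∫ t in Ioi (0:ℝ), F (t - ξ) = ∫ t in Ioi (-ξ), F t := by
    intro ξ
    rw [← integral_indicator measurableSet_Ioi, ← integral_indicator measurableSet_Ioi,
      ← integral_sub_right_eq_self ((Ioi (-ξ)).indicator F) ξ]
    congr 1
    ext t
    simp [indicator]
  simp only [e]
  exact (aecover_Ioi (μ := volume) tendsto_neg_atTop_atBot).integral_tendsto_of_countably_generated hF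

lemma tail_neg {F : ℝ → ℝ} (hF : Integrable F) :
    Tendsto (fun ξ : ℝ => ∫ t in Iio (0:ℝ), F (t - ξ)) atTop (𝓝 0) := by
  have e : ∀ ξ : ℝ, ∫ t in Iio (0:ℝ), F (t - ξ) = (∫ t, F t) - ∫ t in Ioi (0:ℝ), F (t - ξ) := by
    intro ξ
    have := nR_split (hF.comp_sub_right ξ)
    rw [integral_sub_right_eq_self (μ := volume) F ξ] at this
    linarith
  simp only [e]
  simpa using (tail_pos hF).const_sub (∫ t, F t)

lemma gs_limit (p q r s : ℝ) :
    Tendsto (fun ξ => GG p q r s ξ (gs ξ) / nR (gs ξ)) atTop (𝓝 (p + q)) := by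
  have hI : ∀ c d : ℝ, Integrable
      (fun x : ℝ => c * (2 * (x^2 * Real.exp (-x^2))) + d * Real.exp (-x^2)) := fun c d =>
    ((gauss_int2.const_mul 2).const_mul c).add (gauss_int.const_mul d)
  have h1 := tail_pos (hI p q)
  have h2 := tail_neg (hI r s)
  have hv : ∫ x : ℝ, (p * (2 * (x^2 * Real.exp (-x^2))) + q * Real.exp (-x^2))
      = (p + q) * ∫ x : ℝ, Real.exp (-x^2) := by
    rw [integral_add ((gauss_int2.const_mul 2).const_mul p) (gauss_int.const_mul q),
      integral_const_mul p, integral_const_mul q, gauss_moment]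
    ring
  have h3 := (h1.add h2).div_const (∫ x : ℝ, Real.exp (-x^2))
  rw [hv, add_zero, mul_div_cancel_right₀ _ gauss_pos.ne'] at h3
  refine h3.congr fun ξ => ?_
  rw [gs_nR]
  simp only [GG, gs_sq, gs_deriv_sq, two_mul]

lemma GS_limit (p q r s : ℝ) (hp : 0 < p) (hr : 0 < r) :
    Tendsto (fun ξ => sInf (GS p q r s ξ)) atTop (𝓝 (p + q)) := by
  have hlow : Tendsto (fun ξ : ℝ => p * (1 - 8/ξ) + q) atTop (𝓝 (p + q)) := by
    have : Tendsto (fun ξ : ℝ => 8/ξ) atTop (𝓝 0) := tendsto_const_nhds.div_atTop tendsto_id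
    simpa using ((this.const_sub 1).const_mul p).add_const q
  have hbig : Tendsto (fun ξ : ℝ => r * ξ^2 + s) atTop atTop :=
    tendsto_atTop_add_const_right _ _ ((tendsto_pow_atTop two_ne_zero).const_mul_atTop hr)
  have hb : ∀ᶠ ξ : ℝ in atTop, ∀ x ∈ GS p q r s ξ, p * (1 - 8/ξ) + q ≤ x := by
    filter_upwards [eventually_ge_atTop 5, hbig.eventually_ge_atTop (p+q)] with ξ h5 h6
    rintro x ⟨u, hu, hn, rfl⟩
    have : 0 < nR u := lt_of_le_of_ne (integral_nonneg fun t => sq_nonneg _) hn.symm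
    rw [le_div_iff₀ this]
    exact GG_lower p q r s ξ hp hr h5 h6 hu
  have hmem : ∀ ξ, GG p q r s ξ (gs ξ) / nR (gs ξ) ∈ GS p q r s ξ := fun ξ =>
    ⟨gs ξ, gs_mem ξ, by rw [gs_nR]; exact gauss_pos.ne', rfl⟩
  refine tendsto_of_tendsto_of_tendsto_of_le_of_le' hlow (gs_limit p q r s) ?_ ?_
  · filter_upwards [hb] with ξ h
    exact le_csInf ⟨_, hmem ξ⟩ h
  · filter_upwards [hb] with ξ h
    exact csInf_le ⟨_, h⟩ (hmem ξ)

lemma MemB1_neg {u : ℝ → ℝ} (hu : MemB1 u) : MemB1 (fun t => u (-t)) := by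
  obtain ⟨hd, h0, h1, h2⟩ := hu
  refine ⟨hd.comp differentiable_neg, h0.comp_neg, ?_, ?_⟩
  · simpa only [deriv_comp_neg, neg_sq] using h1.comp_neg
  · simpa only [neg_sq] using h2.comp_neg

lemma nR_neg (u : ℝ → ℝ) : nR (fun t => u (-t)) = nR u :=
  integral_neg_eq_self (fun t => (u t)^2) volume

lemma GG_neg (p q r s ξ : ℝ) (u : ℝ → ℝ) :
    GG p q r s ξ (fun t => u (-t)) = GG r s p q (-ξ) u := by
  have h : ∀ t, (t - ξ)^2 = (-t - -ξ)^2 := fun t => by ring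
  simp only [GG, deriv_comp_neg, neg_sq, h]
  rw [integral_comp_neg_Ioi 0
    (fun t => p * ((deriv u t)^2 + (t - -ξ)^2 * (u t)^2) + q * (u t)^2),
    ← integral_Iic_eq_integral_Iio, integral_comp_neg_Iic 0
    (fun t => r * ((deriv u t)^2 + (t - -ξ)^2 * (u t)^2) + s * (u t)^2),
    neg_zero, integral_Iic_eq_integral_Iio, add_comm]

lemma GS_neg_sub (p q r s ξ : ℝ) : GS r s p q (-ξ) ⊆ GS p q r s ξ := by
  rintro x ⟨u, hu, hn, rfl⟩
  exact ⟨_, MemB1_neg hu, by rwa [nR_neg], by rw [nR_neg, GG_neg]⟩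

lemma GS_neg (p q r s ξ : ℝ) : GS r s p q (-ξ) = GS p q r s ξ := by
  refine (GS_neg_sub p q r s ξ).antisymm ?_
  simpa using GS_neg_sub r s p q (-ξ)

lemma mu1_eq (a m α ξ : ℝ) : mu1 a m α ξ = sInf (GS 1 (-α) (1/m) (a*α) ξ) := by
  have : ∀ u, QI a m α ξ u = GG 1 (-α) (1/m) (a*α) ξ u := by
    intro u
    simp only [QI, GG, one_mul, neg_mul, sub_eq_add_neg]
  simp only [mu1, GS, this]

/-- `μ₁(a,m,α;ξ) → 1/m + aα` as `ξ → -∞` and `μ₁(a,m,α;ξ) → 1 - α`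
as `ξ → +∞`. -/
theorem mu1_limits (a m α : ℝ) (ha : 0 < a) (hm : 0 < m) (hα : 0 < α) :
    Tendsto (fun ξ => mu1 a m α ξ) atBot (𝓝 (1/m + a * α)) ∧
    Tendsto (fun ξ => mu1 a m α ξ) atTop (𝓝 (1 - α)) := by
  simp only [mu1_eq]
  constructor
  · have h := (GS_limit (1/m) (a*α) 1 (-α) (by positivity) one_pos).comp tendsto_neg_atBot_atTop
    refine h.congr fun ξ => ?_
    simp only [Function.comp, GS_neg]
  · simpa [sub_eq_add_neg] using GS_limit 1 (-α) (1/m) (a*α) one_pos (by positivity)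
end
end

section
/- Let a, m, α > 0 and let η ∈ ℝ be a critical point of ξ ↦ μ₁(a,m,α;ξ) (in particular any minimizer). Let f = f_{α,η} be the positive normalized ground state of H[a,m,α;η]. Then ∫₀^∞ (t-η)|f(t)|² dt + (1/m) ∫_{-∞}^0 (t-η)|f(t)|² dt = 0. -/
open MeasureTheory Set Filter Topology

noncomputable section

lemma mono_aux {F F' : ℝ → ℝ} {T : ℝ} (h : ∀ t, T ≤ t → HasDerivAt F (F' t) t)
    (h0 : ∀ t, T ≤ t → 0 ≤ F' t) : MonotoneOn F (Ici T) := by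
  refine monotoneOn_of_hasDerivWithinAt_nonneg (f' := F') (convex_Ici T)
    (fun t ht => (h t ht).continuousAt.continuousWithinAt) ?_ ?_
  · intro x hx
    exact (h x (interior_subset hx)).hasDerivWithinAt
  · intro x hx
    exact h0 x (interior_subset hx)

lemma sq_dom_integrable {u ρ : ℝ → ℝ} (hu : MemB1p u) (B : ℝ) (hρ : ContinuousOn ρ (Ioi 0))
    (hb : ∀ t, 0 < t → |ρ t| ≤ B * (1 + t ^ 2)) :
    IntegrableOn (fun t => ρ t * (u t) ^ 2) (Ioi 0) := by
  obtain ⟨hd, h1, h2, h3⟩ := hu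
  refine Integrable.mono' (g := fun t => B * ((u t) ^ 2 + t ^ 2 * (u t) ^ 2))
    ((h1.add h3).const_mul B) ?_ ?_
  · exact ((hρ.mul (hd.continuous.continuousOn.pow 2)).aestronglyMeasurable measurableSet_Ioi)
  · refine (ae_restrict_iff' measurableSet_Ioi).2 (Eventually.of_forall fun t ht => ?_)
    rw [Real.norm_eq_abs, abs_mul, abs_of_nonneg (sq_nonneg (u t))]
    have := mul_le_mul_of_nonneg_right (hb t ht) (sq_nonneg (u t))
    nlinarith

lemma cross_integrable {u ρ : ℝ → ℝ} (hu : MemB1p u) (B : ℝ) (hρ : ContinuousOn ρ (Ioi 0))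
    (hb : ∀ t, 0 < t → |ρ t| ≤ B * (1 + t)) :
    IntegrableOn (fun t => ρ t * (2 * u t * deriv u t)) (Ioi 0) := by
  have hu' := hu
  obtain ⟨hd, h1, h2, h3⟩ := hu
  have hsq : IntegrableOn (fun t => (ρ t) ^ 2 * (u t) ^ 2) (Ioi 0) := by
    refine sq_dom_integrable hu' (2 * B ^ 2) (hρ.pow 2) ?_
    intro t ht
    have ht' : 0 < t := ht
    have h := hb t ht
    rw [abs_of_nonneg (sq_nonneg _), ← sq_abs (ρ t)]
    have h0 := abs_nonneg (ρ t)
    have : |ρ t| ^ 2 ≤ (B * (1 + t)) ^ 2 := pow_le_pow_left₀ h0 h 2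
    nlinarith [mul_nonneg (sq_nonneg B) (sq_nonneg (1 - t))]
  refine Integrable.mono' (hsq.add h2) ?_ ?_
  · refine (hρ.aestronglyMeasurable measurableSet_Ioi).mul ?_
    exact ((hd.continuous.measurable.const_mul 2).mul (measurable_deriv u)).aestronglyMeasurable
  · refine (ae_restrict_iff' measurableSet_Ioi).2 (Eventually.of_forall fun t ht => ?_)
    rw [Real.norm_eq_abs, abs_le]
    simp only [Pi.add_apply]
    constructor <;> nlinarith [sq_nonneg (ρ t * u t + deriv u t), sq_nonneg (ρ t * u t - deriv u t)]

/-- Barta-type lower bound on the half line. -/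
lemma barta {u ψ r : ℝ → ℝ} {ξ c B L : ℝ} (hu : MemB1p u)
    (hψ0 : ContinuousWithinAt ψ (Ici 0) 0)
    (hψ : ∀ t, 0 < t → HasDerivAt ψ ((t - ξ) ^ 2 - c - (ψ t) ^ 2 - r t) t)
    (hr : ContinuousOn r (Ioi 0))
    (hψb : ∀ t, 0 < t → |ψ t| ≤ B * (1 + t))
    (hrb : ∀ t, 0 < t → |r t| ≤ B)
    (hL : ∀ t, 0 < t → L ≤ r t) :
    L * (∫ t in Ioi (0:ℝ), (u t) ^ 2) - ψ 0 * (u 0) ^ 2 ≤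
      ∫ t in Ioi (0:ℝ), ((deriv u t) ^ 2 + (t - ξ) ^ 2 * (u t) ^ 2 - c * (u t) ^ 2) := by
  have hu' := hu
  obtain ⟨hd, h1, h2, h3⟩ := hu
  have hψc : ContinuousOn ψ (Ioi 0) := fun t ht => (hψ t ht).continuousAt.continuousWithinAt
  have hB : 0 ≤ B := le_trans (abs_nonneg _) (hrb 1 one_pos)
  have i1 : IntegrableOn (fun t => r t * (u t) ^ 2) (Ioi 0) := by
    refine sq_dom_integrable hu' B hr fun t ht => (hrb t ht).trans ?_
    nlinarith [mul_nonneg hB (sq_nonneg t)]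
  have i2 : IntegrableOn (fun t => (t - ξ) ^ 2 * (u t) ^ 2) (Ioi 0) := by
    refine sq_dom_integrable hu' (2 * (1 + ξ ^ 2)) (by fun_prop) fun t ht => ?_
    rw [abs_of_nonneg (sq_nonneg _)]
    nlinarith [sq_nonneg (t + ξ), mul_nonneg (sq_nonneg ξ) (sq_nonneg t)]
  have i3 : IntegrableOn (fun t => (ψ t) ^ 2 * (u t) ^ 2) (Ioi 0) := by
    refine sq_dom_integrable hu' (2 * B ^ 2) (hψc.pow 2) fun t ht => ?_
    have h := hψb t ht
    rw [abs_of_nonneg (sq_nonneg _), ← sq_abs (ψ t)]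
    have : |ψ t| ^ 2 ≤ (B * (1 + t)) ^ 2 := pow_le_pow_left₀ (abs_nonneg _) h 2
    nlinarith [mul_nonneg (sq_nonneg B) (sq_nonneg (1 - t))]
  have i4 := cross_integrable hu' B hψc hψb
  have i5 : IntegrableOn (fun t => ψ t * (u t) ^ 2) (Ioi 0) := by
    refine sq_dom_integrable hu' (2 * B) hψc fun t ht => (hψb t ht).trans ?_
    nlinarith [mul_nonneg hB (sq_nonneg (1 - t)), mul_nonneg hB (sq_nonneg t)]
  have hder : ∀ t ∈ Ioi (0:ℝ), HasDerivAt (fun t => ψ t * (u t) ^ 2)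
      ((t - ξ) ^ 2 * (u t) ^ 2 - c * (u t) ^ 2 - (ψ t) ^ 2 * (u t) ^ 2 - r t * (u t) ^ 2
        + ψ t * (2 * u t * deriv u t)) t := by
    intro t ht
    refine ((hψ t ht).fun_mul ((hd t).hasDerivAt.fun_pow 2)).congr_deriv ?_
    push_cast
    ring
  have ider : IntegrableOn (fun t => (t - ξ) ^ 2 * (u t) ^ 2 - c * (u t) ^ 2
      - (ψ t) ^ 2 * (u t) ^ 2 - r t * (u t) ^ 2 + ψ t * (2 * u t * deriv u t)) (Ioi 0) :=
    (((i2.sub (h1.const_mul c)).sub i3).sub i1).add i4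
  have hlim := tendsto_zero_of_hasDerivAt_of_integrableOn_Ioi hder ider i5
  have hint := integral_Ioi_of_hasDerivAt_of_tendsto
    (hψ0.mul ((hd.continuous.continuousWithinAt).pow 2)) hder ider hlim
  have key : ∫ t in Ioi (0:ℝ), (((t - ξ) ^ 2 * (u t) ^ 2 - c * (u t) ^ 2
      - (ψ t) ^ 2 * (u t) ^ 2 - r t * (u t) ^ 2 + ψ t * (2 * u t * deriv u t)) + L * (u t) ^ 2) ≤
      ∫ t in Ioi (0:ℝ), ((deriv u t) ^ 2 + (t - ξ) ^ 2 * (u t) ^ 2 - c * (u t) ^ 2) := by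
    refine setIntegral_mono_on (ider.add (h1.const_mul L)) ((h2.add i2).sub (h1.const_mul c))
      measurableSet_Ioi fun t ht => ?_
    have := mul_le_mul_of_nonneg_right (hL t ht) (sq_nonneg (u t))
    nlinarith [sq_nonneg (ψ t * u t - deriv u t)]
  rw [integral_add ider (h1.const_mul L), hint, integral_const_mul] at key
  simp only [Pi.mul_apply, Pi.pow_apply] at key
  linarith

/-- Decay estimates for the positive solution on the half line. -/
lemma decay {f g : ℝ → ℝ} {η c N : ℝ} (hf : ∀ t, 0 < t → HasDerivAt f (g t) t)
    (hg : ∀ t, 0 < t → HasDerivAt g (((t - η) ^ 2 - c) * f t) t)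
    (hpos : ∀ t, 0 < f t) (hint : IntegrableOn (fun t => (f t) ^ 2) (Ioi 0)) :
    ∃ T, 0 < T ∧ (∀ t, T ≤ t → |N| + 1 ≤ t - η ∧ g t ≤ -((t - η) / 2) * f t ∧
      -(2 * (t - η)) * f t ≤ g t) := by
  set T : ℝ := |η| + |c| + |N| + 2 with hT
  have hT0 : 0 < T := by positivity
  have hτ : ∀ t, T ≤ t → |c| + |N| + 2 ≤ t - η := fun t ht => by
    have := le_abs_self η
    linarith
  have hτ2 : ∀ t, T ≤ t → 2 * |c| + 4 ≤ (t - η) ^ 2 := fun t ht => by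
    have := hτ t ht
    nlinarith [abs_nonneg c, abs_nonneg N]
  have hgm : MonotoneOn g (Ici T) := by
    refine mono_aux (fun t ht => hg t (hT0.trans_le ht)) fun t ht => ?_
    have := hτ2 t ht
    have := le_abs_self c
    have := abs_nonneg c
    exact mul_nonneg (by linarith) (hpos t).le
  have hg0 : ∀ t, T ≤ t → g t ≤ 0 := by
    intro t0 ht0
    by_contra! hcon
    have hfm : MonotoneOn f (Ici t0) := by
      refine mono_aux (fun t ht => hf t (hT0.trans_le (ht0.trans ht))) fun t ht => ?_
      exact hcon.le.trans (hgm ht0 (ht0.trans ht) ht)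
    have hi : IntegrableOn (fun _ : ℝ => (f t0) ^ 2) (Ioi t0) := by
      refine Integrable.mono' (hint.mono_set (Ioi_subset_Ioi (hT0.le.trans ht0)))
        aestronglyMeasurable_const ?_
      refine (ae_restrict_iff' measurableSet_Ioi).2 (Eventually.of_forall fun t ht => ?_)
      rw [Real.norm_eq_abs, abs_of_nonneg (sq_nonneg _)]
      exact pow_le_pow_left₀ (hpos t0).le (hfm self_mem_Ici (mem_Ici.2 (le_of_lt ht)) (le_of_lt ht)) 2
    rw [integrableOn_const_iff] at hi
    have := (hpos t0).ne'
    simp_all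
  have hfa : ∀ t, T ≤ t → f t ≤ f T := by
    have : MonotoneOn (fun t => - f t) (Ici T) :=
      mono_aux (fun t ht => (hf t (hT0.trans_le ht)).neg)
        fun t ht => by have := hg0 t ht; linarith
    intro t ht
    have := this self_mem_Ici ht ht
    simp only at this
    linarith
  have hlin : Tendsto (fun t : ℝ => t - η) atTop atTop := tendsto_atTop_add_const_right _ _ tendsto_id
  have hexp : ∀ b : ℝ, 0 < b → Tendsto (fun t => (t - η) * Real.exp (-b * (t - η) ^ 2)) atTop (𝓝 0) := by
    intro b hb
    have h1 : Tendsto (fun x : ℝ => x * Real.exp (-b * x ^ 2)) atTop (𝓝 0) := by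
      have h := (Real.tendsto_pow_mul_exp_neg_atTop_nhds_zero 1).comp (tendsto_id.const_mul_atTop hb)
      have h' := h.const_mul (1 / b)
      rw [mul_zero] at h'
      refine squeeze_zero' (eventually_ge_atTop 0 |>.mono fun x hx => by positivity) ?_ h'
      filter_upwards [eventually_ge_atTop 1] with x hx
      have : Real.exp (-b * x ^ 2) ≤ Real.exp (-(b * x)) := by
        apply Real.exp_le_exp.2
        nlinarith [mul_nonneg hb.le (mul_nonneg (by linarith : 0 ≤ x) (by linarith : 0 ≤ x - 1))]
      simp only [Function.comp, id, pow_one]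
      have h2 : 1 / b * (b * x * Real.exp (-(b * x))) = x * Real.exp (-(b * x)) := by
        field_simp
      rw [h2]
      exact mul_le_mul_of_nonneg_left this (by linarith)
    exact h1.comp hlin
  have hp : ∀ b t : ℝ, HasDerivAt (fun t => Real.exp (-b * (t - η) ^ 2))
      (Real.exp (-b * (t - η) ^ 2) * (-b * (2 * (t - η)))) t := by
    intro b t
    refine (((((hasDerivAt_id t).sub_const η).fun_pow 2).const_mul (-b)).exp).congr_deriv ?_
    simp
  have hW : ∀ b t : ℝ, T ≤ t → HasDerivAt
      (fun t => Real.exp (-b * (t - η) ^ 2) * (g t + 2 * b * ((t - η) * f t)))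
      (Real.exp (-b * (t - η) ^ 2) * f t * ((1 - 4 * b ^ 2) * (t - η) ^ 2 - c + 2 * b)) t := by
    intro b t ht
    have ht0 := hT0.trans_le ht
    refine ((hp b t).fun_mul ((hg t ht0).fun_add (((((hasDerivAt_id t).sub_const η)).fun_mul
      (hf t ht0)).const_mul (2 * b)))).congr_deriv ?_
    simp only [id]
    ring
  refine ⟨T, hT0, fun t ht => ⟨by linarith [hτ t ht, abs_nonneg c], ?_, ?_⟩⟩
  · by_contra! hcon
    have hm := mono_aux (hW (1 / 4)) (fun s hs => by
      have := hτ2 s hs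
      have := le_abs_self c
      have := abs_nonneg c
      exact mul_nonneg (mul_nonneg (Real.exp_pos _).le (hpos s).le) (by norm_num; linarith))
    have hd : 0 < Real.exp (-(1 / 4) * (t - η) ^ 2) * (g t + 2 * (1 / 4) * ((t - η) * f t)) :=
      mul_pos (Real.exp_pos _) (by linarith)
    have hl := ((hexp (1 / 4) (by norm_num)).const_mul (f T))
    rw [mul_zero] at hl
    refine absurd (ge_of_tendsto hl ?_) (not_le.2 hd)
    filter_upwards [eventually_ge_atTop t] with s hs
    have h1 := hm ht (ht.trans hs) hs
    refine h1.trans ?_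
    have hsT := ht.trans hs
    have h2 : g s + 2 * (1 / 4) * ((s - η) * f s) ≤ (s - η) * f T := by
      have a1 := hg0 s hsT
      have a2 : 0 ≤ s - η := by linarith [hτ s hsT, abs_nonneg c, abs_nonneg N]
      have a3 := mul_le_mul_of_nonneg_left (hfa s hsT) a2
      have a4 := mul_nonneg a2 (hpos s).le
      linarith
    have := mul_le_mul_of_nonneg_left h2 (Real.exp_pos (-(1 / 4) * (s - η) ^ 2)).le
    linarith
  · have hm := mono_aux (fun s hs => (hW 1 s hs).neg) (fun s hs => by
      have := hτ2 s hs
      have := neg_abs_le c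
      have := abs_nonneg c
      have h := mul_nonneg (mul_nonneg (Real.exp_pos (-1 * (s - η) ^ 2)).le (hpos s).le)
        (by linarith : 0 ≤ -((1 - 4 * 1 ^ 2) * (s - η) ^ 2 - c + 2 * 1))
      linarith)
    have hl := ((hexp 1 (by norm_num)).const_mul (-(g T)))
    rw [mul_zero] at hl
    have hpos' : 0 ≤ Real.exp (-1 * (t - η) ^ 2) * (g t + 2 * 1 * ((t - η) * f t)) := by
      rw [← neg_nonpos]
      refine ge_of_tendsto hl ?_
      filter_upwards [eventually_ge_atTop t] with s hs
      refine (hm ht (ht.trans hs) hs).trans ?_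
      have hsT := ht.trans hs
      simp only [Pi.neg_apply]
      have a1 := hgm self_mem_Ici hsT hsT
      have a0 := hg0 T le_rfl
      have a2 : 1 ≤ s - η := by linarith [hτ s hsT, abs_nonneg c, abs_nonneg N]
      have a3 := mul_nonneg (by linarith : 0 ≤ s - η) (hpos s).le
      have h2 : (s - η) * g T ≤ g s + 2 * 1 * ((s - η) * f s) := by nlinarith
      have := mul_le_mul_of_nonneg_left h2 (Real.exp_pos (-1 * (s - η) ^ 2)).le
      linarith
    have := nonneg_of_mul_nonneg_right hpos' (Real.exp_pos _)
    linarith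

lemma half_line {f g : ℝ → ℝ} {η c N : ℝ} (hfc : Continuous f)
    (hf : ∀ t, 0 < t → HasDerivAt f (g t) t)
    (hg : ∀ t, 0 < t → HasDerivAt g (((t - η) ^ 2 - c) * f t) t)
    (hgc : ContinuousWithinAt g (Ici 0) 0)
    (hpos : ∀ t, 0 < f t) (hint : IntegrableOn (fun t => (f t) ^ 2) (Ioi 0))
    (hi : IntegrableOn (fun t => (t - η) * (f t) ^ 2) (Ioi 0)) :
    ∃ C : ℝ, 0 ≤ C ∧ ∀ (ε : ℝ) (u : ℝ → ℝ), MemB1p u →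
      (-2 * ε * N - C * ε ^ 2) * (∫ t in Ioi (0:ℝ), (u t) ^ 2)
        - (g 0 / f 0 + ε * ((∫ t in Ioi (0:ℝ), (2 * (t - η) - 2 * N) * (f t) ^ 2) / (f 0) ^ 2))
          * (u 0) ^ 2 ≤
      ∫ t in Ioi (0:ℝ), ((deriv u t) ^ 2 + (t - (η + ε)) ^ 2 * (u t) ^ 2 - c * (u t) ^ 2) := by
  obtain ⟨T, hT0, hT⟩ := decay (N := N) hf hg hpos hint
  set h : ℝ → ℝ := fun t => (2 * (t - η) - 2 * N) * (f t) ^ 2 with hh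
  have hhc : Continuous h := by fun_prop
  have hhi : IntegrableOn h (Ioi 0) := by
    have h1 : IntegrableOn (fun t => 2 * ((t - η) * (f t) ^ 2) - 2 * N * (f t) ^ 2) (Ioi 0) :=
      (hi.const_mul 2).sub (hint.const_mul (2 * N))
    refine h1.congr_fun (fun t _ => ?_) measurableSet_Ioi
    simp only [hh]
    ring
  set J : ℝ := ∫ t in Ioi (0:ℝ), h t with hJ
  set K : ℝ → ℝ := fun t => J - ∫ s in (0:ℝ)..t, h s with hK
  have hKd : ∀ t, HasDerivAt K (-h t) t := fun t =>
    ((hhc.integral_hasStrictDerivAt 0 t).hasDerivAt).const_sub J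
  have hKc : Continuous K := continuous_iff_continuousAt.2 fun t => (hKd t).continuousAt
  have hKI : ∀ t, 0 ≤ t → K t = ∫ s in Ioi t, h s := by
    intro t ht
    have := intervalIntegral.integral_interval_add_Ioi hhi (hhi.mono_set (Ioi_subset_Ioi ht))
    simp only [hK, hJ]
    linarith
  have hgcont : ContinuousOn g (Ici 0) := by
    intro t ht
    rcases (mem_Ici.1 ht).eq_or_lt with h0 | h0
    · rw [← h0]; exact hgc
    · exact (hg t h0).continuousAt.continuousWithinAt
  have hf0 : ∀ t, f t ≠ 0 := fun t => (hpos t).ne'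
  have hKb : ∀ t, T ≤ t → |K t| ≤ 4 * (f t) ^ 2 := by
    intro t ht
    have ht0 : 0 < t := hT0.trans_le ht
    have hsub := Ioi_subset_Ioi ht0.le
    have hI : ∫ s in Ioi t, (s - η) * (f s) ^ 2 ≤ (f t) ^ 2 := by
      refine le_of_tendsto (intervalIntegral_tendsto_integral_Ioi t (hi.mono_set hsub) tendsto_id) ?_
      have hc : Continuous fun s => (s - η) * (f s) ^ 2 := by fun_prop
      have hm : MonotoneOn (fun R => -(f R) ^ 2 - ∫ s in t..R, (s - η) * (f s) ^ 2) (Ici t) := by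
        refine mono_aux (F' := fun R => -(2 * f R * g R) - (R - η) * (f R) ^ 2) ?_ ?_
        · intro R hR
          refine ((((hf R (ht0.trans_le hR)).fun_pow 2).fun_neg).fun_sub
            (hc.integral_hasStrictDerivAt t R).hasDerivAt).congr_deriv ?_
          push_cast
          ring
        · intro R hR
          have h2 := (hT R (ht.trans hR)).2.1
          nlinarith [mul_le_mul_of_nonneg_left h2 (hpos R).le]
      filter_upwards [eventually_ge_atTop t] with R hR
      have := hm self_mem_Ici (mem_Ici.2 hR) hR
      simp only [intervalIntegral.integral_same, id] at this ⊢
      nlinarith [sq_nonneg (f R)]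
    rw [hKI t ht0.le]
    calc |∫ s in Ioi t, h s| ≤ ∫ s in Ioi t, 4 * ((s - η) * (f s) ^ 2) := by
          rw [← Real.norm_eq_abs]
          refine norm_integral_le_of_norm_le ((hi.mono_set hsub).const_mul 4) ?_
          refine (ae_restrict_iff' measurableSet_Ioi).2 (Eventually.of_forall fun s hs => ?_)
          have h1 := (hT s (ht.trans (le_of_lt hs))).1
          rw [Real.norm_eq_abs, hh]
          simp only
          rw [abs_mul, abs_of_nonneg (sq_nonneg (f s)), ← mul_assoc]
          refine mul_le_mul_of_nonneg_right ?_ (sq_nonneg _)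
          have := le_abs_self N
          have := neg_abs_le N
          rw [abs_le]
          constructor <;> linarith
      _ ≤ 4 * (f t) ^ 2 := by
          rw [integral_const_mul]; linarith
  obtain ⟨b1, hb1⟩ := (isCompact_Icc (a := (0:ℝ)) (b := T)).exists_bound_of_continuousOn
    (f := fun t => g t / f t)
    ((hgcont.mono Icc_subset_Ici_self).div hfc.continuousOn (fun t _ => hf0 t))
  obtain ⟨b2, hb2⟩ := (isCompact_Icc (a := (0:ℝ)) (b := T)).exists_bound_of_continuousOn
    (f := fun t => K t / (f t) ^ 2)
    (hKc.continuousOn.div (hfc.pow 2).continuousOn (fun t _ => pow_ne_zero 2 (hf0 t)))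
  have hb1' : 0 ≤ b1 := (norm_nonneg _).trans (hb1 0 ⟨le_rfl, hT0.le⟩)
  have hb2' : 0 ≤ b2 := (norm_nonneg _).trans (hb2 0 ⟨le_rfl, hT0.le⟩)
  set B1 := b1 + 2 * (1 + |η|) with hB1
  set B2 := b2 + 4 with hB2
  have hgf : ∀ t, 0 < t → |g t / f t| ≤ B1 * (1 + t) := by
    intro t ht
    have hη := abs_nonneg η
    rcases le_total t T with h1 | h1
    · have := hb1 t ⟨ht.le, h1⟩
      rw [Real.norm_eq_abs] at this
      nlinarith [mul_nonneg hb1' ht.le, mul_nonneg hη ht.le]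
    · obtain ⟨e1, e2, e3⟩ := hT t h1
      have hτ : 0 ≤ t - η := by linarith [abs_nonneg N]
      have h2 : |g t / f t| ≤ 2 * (t - η) := by
        rw [abs_div, abs_of_pos (hpos t), div_le_iff₀ (hpos t), abs_le]
        constructor
        · linarith
        · nlinarith [mul_nonneg hτ (hpos t).le]
      have := neg_abs_le η
      nlinarith [mul_nonneg hb1' ht.le, mul_nonneg hη ht.le]
  have hkb : ∀ t, 0 < t → |K t / (f t) ^ 2| ≤ B2 := by
    intro t ht
    rcases le_total t T with h1 | h1
    · have := hb2 t ⟨ht.le, h1⟩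
      rw [Real.norm_eq_abs] at this
      linarith
    · have h2 := hKb t h1
      have h3 : 0 < (f t) ^ 2 := pow_pos (hpos t) 2
      rw [abs_div, abs_of_pos h3, div_le_iff₀ h3]
      nlinarith
  have hB1' : 0 ≤ B1 := by positivity
  have hB2' : 0 ≤ B2 := by positivity
  refine ⟨B2 ^ 2, by positivity, fun ε u hu => ?_⟩
  have hk2 : ∀ t, 0 < t → (K t / (f t) ^ 2) ^ 2 ≤ B2 ^ 2 := fun t ht =>
    sq_le_sq' (abs_le.1 (hkb t ht)).1 (abs_le.1 (hkb t ht)).2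
  have main := barta (ψ := fun t => g t / f t + ε * (K t / (f t) ^ 2))
    (r := fun t => -2 * ε * N + ε ^ 2 * (1 - (K t / (f t) ^ 2) ^ 2))
    (ξ := η + ε) (c := c)
    (B := B1 + |ε| * B2 + (2 * |ε| * |N| + ε ^ 2 * (1 + B2 ^ 2)))
    (L := -2 * ε * N - B2 ^ 2 * ε ^ 2) hu ?_ ?_ ?_ ?_ ?_ ?_
  · have : K 0 = J := by simp [hK]
    simp only [this] at main
    exact main
  · refine (hgc.div hfc.continuousWithinAt (hf0 0)).add (ContinuousWithinAt.mul
      continuousWithinAt_const ?_)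
    exact hKc.continuousWithinAt.div (hfc.pow 2).continuousWithinAt (pow_ne_zero 2 (hf0 0))
  · intro t ht
    refine (((hg t ht).fun_div (hf t ht) (hf0 t)).fun_add (((hKd t).fun_div
      ((hf t ht).fun_pow 2) (pow_ne_zero 2 (hf0 t))).const_mul ε)).congr_deriv ?_
    have := hf0 t
    simp only [hh]
    push_cast
    field_simp
    ring
  · refine Continuous.continuousOn ?_
    have : Continuous fun t => K t / (f t) ^ 2 :=
      hKc.div (hfc.pow 2) (fun t => pow_ne_zero 2 (hf0 t))
    fun_prop
  · intro t ht
    have h1 := hgf t ht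
    have h2 := hkb t ht
    have h3 : |ε * (K t / (f t) ^ 2)| ≤ |ε| * B2 := by
      rw [abs_mul]; exact mul_le_mul_of_nonneg_left h2 (abs_nonneg _)
    have h4 := abs_add_le (g t / f t) (ε * (K t / (f t) ^ 2))
    have h5 : 0 ≤ 2 * |ε| * |N| + ε ^ 2 * (1 + B2 ^ 2) := by positivity
    have h6 : 0 ≤ |ε| * B2 := by positivity
    nlinarith [mul_nonneg h5 ht.le, mul_nonneg h6 ht.le]
  · intro t ht
    have h1 := hk2 t ht
    have h2 : |-2 * ε * N| = 2 * |ε| * |N| := by simp [abs_mul]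
    have h3 : |ε ^ 2 * (1 - (K t / (f t) ^ 2) ^ 2)| ≤ ε ^ 2 * (1 + B2 ^ 2) := by
      rw [abs_mul, abs_of_nonneg (sq_nonneg ε)]
      refine mul_le_mul_of_nonneg_left ?_ (sq_nonneg ε)
      rw [abs_le]
      constructor <;> nlinarith [sq_nonneg (K t / (f t) ^ 2)]
    have h4 := abs_add_le (-2 * ε * N) (ε ^ 2 * (1 - (K t / (f t) ^ 2) ^ 2))
    have h6 : 0 ≤ |ε| * B2 := by positivity
    linarith
  · intro t ht
    have h1 := mul_le_mul_of_nonneg_left (hk2 t ht) (sq_nonneg ε)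
    nlinarith [sq_nonneg ε]

/-- Half-line form. -/
def Ih (c ξ : ℝ) (u : ℝ → ℝ) : ℝ :=
  ∫ t in Ioi (0:ℝ), ((deriv u t) ^ 2 + (t - ξ) ^ 2 * (u t) ^ 2 - c * (u t) ^ 2)

lemma Ih_integrable {u : ℝ → ℝ} (hu : MemB1p u) (c ξ : ℝ) :
    IntegrableOn (fun t => (deriv u t) ^ 2 + (t - ξ) ^ 2 * (u t) ^ 2 - c * (u t) ^ 2) (Ioi 0) := by
  have i2 : IntegrableOn (fun t => (t - ξ) ^ 2 * (u t) ^ 2) (Ioi 0) := by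
    refine sq_dom_integrable hu (2 * (1 + ξ ^ 2)) (by fun_prop) fun t ht => ?_
    rw [abs_of_nonneg (sq_nonneg _)]
    nlinarith [sq_nonneg (t + ξ), mul_nonneg (sq_nonneg ξ) (sq_nonneg t)]
  exact (hu.2.2.1.add i2).sub (hu.2.1.const_mul c)

lemma Ih_second_diff {u : ℝ → ℝ} (hu : MemB1p u) (c ξ ε : ℝ) :
    Ih c (ξ + ε) u + Ih c (ξ - ε) u = 2 * Ih c ξ u + 2 * ε ^ 2 * np u := by
  unfold Ih np
  rw [← integral_add (Ih_integrable hu _ _) (Ih_integrable hu _ _), ← integral_const_mul,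
    ← integral_const_mul, ← integral_add ((Ih_integrable hu _ _).const_mul _)
      (hu.2.1.const_mul _)]
  congr 1
  ext t
  ring

lemma MemB1.pos {u : ℝ → ℝ} (hu : MemB1 u) : MemB1p u :=
  ⟨hu.1, hu.2.1.integrableOn, hu.2.2.1.integrableOn, hu.2.2.2.integrableOn⟩

lemma MemB1.refl {u : ℝ → ℝ} (hu : MemB1 u) : MemB1p (fun t => u (-t)) := by
  obtain ⟨h0, h1, h2, h3⟩ := hu
  refine ⟨h0.comp differentiable_neg, h1.comp_neg.integrableOn, ?_, ?_⟩
  · refine h2.comp_neg.integrableOn.congr_fun (fun t _ => ?_) measurableSet_Ioi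
    simp only [deriv_comp_neg]
    ring
  · refine h3.comp_neg.integrableOn.congr_fun (fun t _ => ?_) measurableSet_Ioi
    simp

lemma Iio_reflect (F : ℝ → ℝ) : ∫ t in Iio (0:ℝ), F t = ∫ t in Ioi (0:ℝ), F (-t) := by
  rw [integral_comp_neg_Ioi, neg_zero, integral_Iic_eq_integral_Iio]

lemma nR_split_s6 {u : ℝ → ℝ} (hi : Integrable (fun t => (u t) ^ 2)) :
    nR u = np u + np (fun t => u (-t)) := by
  unfold nR np
  rw [← Iio_reflect (fun t => (u t) ^ 2), ← integral_Iic_eq_integral_Iio, add_comm]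
  exact (intervalIntegral.integral_Iic_add_Ioi hi.integrableOn hi.integrableOn).symm

lemma QI_split {u : ℝ → ℝ} (hu : MemB1 u) {a m α ξ : ℝ} (hm : 0 < m) (μ : ℝ) :
    QI a m α ξ u = Ih (α + μ) ξ u + μ * np u +
      ((1 / m) * Ih (m * (μ - a * α)) (-ξ) (fun t => u (-t)) + μ * np (fun t => u (-t))) := by
  unfold QI Ih np
  have hp := hu.pos
  have hr := hu.refl
  congr 1
  · rw [← integral_const_mul, ← integral_add (Ih_integrable hp _ _) (hp.2.1.const_mul _)]
    congr 1
    ext t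
    ring
  · rw [Iio_reflect, ← integral_const_mul, ← integral_const_mul,
      ← integral_add ((Ih_integrable hr _ _).const_mul _) (hr.2.1.const_mul _)]
    congr 1
    ext t
    rw [deriv_comp_neg]
    field_simp
    ring

lemma gauss_mem : MemB1 (fun t => Real.exp (-t ^ 2)) ∧ nR (fun t => Real.exp (-t ^ 2)) ≠ 0 := by
  have e : ∀ t : ℝ, Real.exp (-t ^ 2) ^ 2 = Real.exp (-2 * t ^ 2) := fun t => by
    rw [← Real.exp_nat_mul]; congr 1; push_cast; ring
  have hd : ∀ t : ℝ, HasDerivAt (fun t => Real.exp (-t ^ 2)) (Real.exp (-t ^ 2) * (-(2 * t))) t := by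
    intro t
    refine ((((hasDerivAt_id t).fun_pow 2).fun_neg).exp).congr_deriv ?_
    simp
  have h1 : Integrable (fun t : ℝ => Real.exp (-t ^ 2) ^ 2) := by
    simp only [e]
    exact integrable_exp_neg_mul_sq (by norm_num)
  have h2 : Integrable (fun t : ℝ => t ^ 2 * Real.exp (-t ^ 2) ^ 2) := by
    simp only [e]
    simpa using integrable_rpow_mul_exp_neg_mul_sq (b := 2) (by norm_num) (s := 2) (by norm_num)
  refine ⟨⟨fun t => (hd t).differentiableAt, h1, ?_, h2⟩, ?_⟩
  · refine (h2.const_mul 4).congr (Eventually.of_forall fun t => ?_)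
    simp only [(hd t).deriv]
    ring
  · unfold nR
    simp only [e]
    rw [integral_gaussian]
    positivity

/-- first-moment identity at a critical point `η` of `ξ ↦ μ₁(a,m,α;ξ)`:
`∫₀^∞ (t-η) f(t)² dt + (1/m)∫_{-∞}^0 (t-η) f(t)² dt = 0`, where `f` is the positive
normalized ground state of `H[a,m,α;η]`. -/
theorem first_moment_identity (a m α η μ dplus dminus : ℝ) (f g : ℝ → ℝ)
    (ha : 0 < a) (hm : 0 < m) (hα : 0 < α)
    (hcrit : deriv (fun ξ => mu1 a m α ξ) η = 0)
    (hμ : μ = mu1 a m α η)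
    (hfc : Continuous f)
    (hfg : ∀ t : ℝ, t ≠ 0 → HasDerivAt f (g t) t)
    (hdp : Tendsto g (𝓝[>] (0:ℝ)) (𝓝 dplus))
    (hdm : Tendsto g (𝓝[<] (0:ℝ)) (𝓝 dminus))
    (htrans : dplus = (1/m) * dminus)
    (hODEp : ∀ t : ℝ, 0 < t → HasDerivAt g (((t - η)^2 - α - μ) * f t) t)
    (hODEm : ∀ t : ℝ, t < 0 → HasDerivAt g (((t - η)^2 + m * (a * α - μ)) * f t) t)
    (hpos : ∀ t : ℝ, 0 < f t)
    (hnorm : (∫ t : ℝ, (f t)^2) = 1)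
    (hi1 : IntegrableOn (fun t => (t - η) * (f t)^2) (Ioi 0))
    (hi2 : IntegrableOn (fun t => (t - η) * (f t)^2) (Iio 0)) :
    (∫ t in Ioi (0:ℝ), (t - η) * (f t)^2) +
      (1/m) * ∫ t in Iio (0:ℝ), (t - η) * (f t)^2 = 0 := by
  set M : ℝ := (∫ t in Ioi (0:ℝ), (t - η) * (f t)^2) +
      (1/m) * ∫ t in Iio (0:ℝ), (t - η) * (f t)^2 with hM
  have hfi : Integrable (fun t => (f t) ^ 2) := by
    by_contra hcon
    rw [integral_undef hcon] at hnorm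
    norm_num at hnorm
  have hm0 := hm.ne'
  have lower : ∃ C : ℝ, 0 ≤ C ∧ ∀ (ε : ℝ) (u : ℝ → ℝ), MemB1 u →
      (μ - 2 * ε * M - C * ε ^ 2) * nR u ≤ QI a m α (η + ε) u := by
    have hgp : ∀ t, 0 < t → Function.update g 0 dplus t = g t := fun t ht =>
      Function.update_of_ne ht.ne' _ _
    obtain ⟨C1, hC1, H1⟩ := half_line (f := f) (g := Function.update g 0 dplus) (η := η)
      (c := α + μ) (N := M) hfc
      (fun t ht => by rw [hgp t ht]; exact hfg t ht.ne')
      (fun t ht => by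
        have h1 := hODEp t ht
        rw [← sub_sub]
        refine h1.congr_of_eventuallyEq ?_
        filter_upwards [lt_mem_nhds ht] with s hs using hgp s hs)
      (by
        rw [continuousWithinAt_update_same]
        refine hdp.mono_left (nhdsWithin_mono _ ?_)
        intro x hx
        exact lt_of_le_of_ne hx.1 (Ne.symm hx.2))
      hpos hfi.integrableOn hi1
    have hgm : ∀ t, 0 < t → Function.update (fun t => - g (-t)) 0 (-dminus) t = - g (-t) :=
      fun t ht => Function.update_of_ne ht.ne' _ _
    have hi2' : IntegrableOn (fun t => (t - -η) * (f (-t)) ^ 2) (Ioi 0) := by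
      have h1 : IntegrableOn (fun t => (-t - η) * (f (-t)) ^ 2) (Ioi 0) := by
        have := (IntegrableOn.comp_neg_Ioi (c := 0) (f := fun t => (t - η) * (f t)^2)
          (by simpa using hi2))
        exact this
      refine h1.neg.congr_fun (fun t _ => ?_) measurableSet_Ioi
      simp only [Pi.neg_apply]
      ring
    have hfr : IntegrableOn (fun t => (f (-t)) ^ 2) (Ioi 0) := hfi.comp_neg.integrableOn
    obtain ⟨C2, hC2, H2⟩ := half_line (f := fun t => f (-t))
      (g := Function.update (fun t => - g (-t)) 0 (-dminus)) (η := -η)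
      (c := m * (μ - a * α)) (N := - (m * M)) (hfc.comp continuous_neg)
      (fun t ht => by
        rw [hgm t ht]
        have h1 := (hfg (-t) (neg_ne_zero.2 ht.ne')).comp t (hasDerivAt_neg t)
        exact h1.congr_deriv (by ring))
      (fun t ht => by
        have h1 := ((hODEm (-t) (neg_lt_zero.2 ht)).comp t (hasDerivAt_neg t)).neg
        have h2 : HasDerivAt (fun t => - g (-t)) (((t - -η) ^ 2 - m * (μ - a * α)) * f (-t)) t := by
          refine h1.congr_deriv ?_
          ring
        refine h2.congr_of_eventuallyEq ?_
        filter_upwards [lt_mem_nhds ht] with s hs using hgm s hs)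
      (by
        rw [continuousWithinAt_update_same]
        refine Tendsto.neg (hdm.comp ?_)
        refine tendsto_nhdsWithin_iff.2 ⟨?_, ?_⟩
        · have : Tendsto (fun t : ℝ => -t) (𝓝 0) (𝓝 (-0)) := tendsto_id.neg
          rw [neg_zero] at this
          exact this.mono_left nhdsWithin_le_nhds
        · filter_upwards [self_mem_nhdsWithin] with x hx
          exact neg_lt_zero.2 (lt_of_le_of_ne hx.1 (Ne.symm hx.2)))
      (fun t => hpos _) hfr hi2'
    refine ⟨C1 + C2 / m, by positivity, fun ε u hu => ?_⟩
    have K1 := H1 ε u hu.pos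
    have K2 := H2 (-ε) _ hu.refl
    change _ ≤ Ih (α + μ) (η + ε) u at K1
    change _ ≤ Ih (m * (μ - a * α)) (-η + -ε) _ at K2
    change (_ : ℝ) * np u - _ ≤ _ at K1
    change (_ : ℝ) * np (fun t => u (-t)) - _ ≤ _ at K2
    rw [QI_split hu hm μ, nR_split_s6 hu.2.1, neg_add]
    simp only [Function.update_self, neg_zero] at K1 K2
    have n1 : (∫ t in Ioi (0:ℝ), (f t) ^ 2) + (∫ t in Ioi (0:ℝ), (f (-t)) ^ 2) = 1 := by
      have := nR_split_s6 hfi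
      unfold nR np at this
      rw [← this, hnorm]
    have e1 : (∫ t in Ioi (0:ℝ), (2 * (t - η) - 2 * M) * (f t) ^ 2) =
        2 * (∫ t in Ioi (0:ℝ), (t - η) * (f t) ^ 2) - 2 * M * (∫ t in Ioi (0:ℝ), (f t) ^ 2) := by
      rw [← integral_const_mul, ← integral_const_mul,
        ← integral_sub (hi1.const_mul _) (hfi.integrableOn.const_mul _)]
      congr 1
      ext t
      ring
    have e2 : (∫ t in Ioi (0:ℝ), (2 * (t - -η) - 2 * -(m * M)) * (f (-t)) ^ 2) =
        2 * (∫ t in Ioi (0:ℝ), (t - -η) * (f (-t)) ^ 2)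
          + 2 * (m * M) * (∫ t in Ioi (0:ℝ), (f (-t)) ^ 2) := by
      rw [← integral_const_mul, ← integral_const_mul,
        ← integral_add (hi2'.const_mul _) (hfr.const_mul _)]
      congr 1
      ext t
      ring
    have e3 : (∫ t in Iio (0:ℝ), (t - η) * (f t)^2) =
        - ∫ t in Ioi (0:ℝ), (t - -η) * (f (-t)) ^ 2 := by
      rw [Iio_reflect, ← integral_neg]
      congr 1
      ext t
      ring
    rw [e1] at K1
    rw [e2] at K2
    rw [e3] at hM
    set A1 := ∫ t in Ioi (0:ℝ), (t - η) * (f t) ^ 2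
    set A2 := ∫ t in Ioi (0:ℝ), (t - -η) * (f (-t)) ^ 2
    set P1 := ∫ t in Ioi (0:ℝ), (f t) ^ 2
    set P2 := ∫ t in Ioi (0:ℝ), (f (-t)) ^ 2
    have K2' := mul_le_mul_of_nonneg_left K2 (by positivity : 0 ≤ 1 / m)
    have bd : (dplus / f 0 + ε * ((2 * A1 - 2 * M * P1) / f 0 ^ 2)) +
        (1 / m) * (-dminus / f 0 + -ε * ((2 * A2 + 2 * (m * M) * P2) / f 0 ^ 2)) = 0 := by
      have hf0 := (hpos 0).ne'
      have hA : A1 = M + A2 / m := by rw [hM]; ring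
      have hP : P1 = 1 - P2 := by linarith
      rw [htrans, hA, hP]
      field_simp
      ring
    have np1 : 0 ≤ np u := integral_nonneg fun t => sq_nonneg _
    have np2 : 0 ≤ np (fun t => u (-t)) := integral_nonneg fun t => sq_nonneg _
    have x1 : 0 ≤ C2 / m * ε ^ 2 * np u := by positivity
    have x2 : 0 ≤ C1 * ε ^ 2 * np (fun t => u (-t)) := by positivity
    have y : 1 / m * ((-2 * -ε * -(m * M) - C2 * (-ε) ^ 2) * np (fun t => u (-t)) -
        (-dminus / f 0 + -ε * ((2 * A2 + 2 * (m * M) * P2) / f 0 ^ 2)) * u 0 ^ 2) =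
        (-2 * ε * M - C2 / m * ε ^ 2) * np (fun t => u (-t)) -
        ((1 / m) * (-dminus / f 0 + -ε * ((2 * A2 + 2 * (m * M) * P2) / f 0 ^ 2))) * u 0 ^ 2 := by
      field_simp
    rw [y] at K2'
    have bd' := congrArg (fun z => z * u 0 ^ 2) bd
    simp only [zero_mul, add_mul] at bd'
    linarith
  obtain ⟨C, hC, hlow⟩ := lower
  have npos : ∀ u : ℝ → ℝ, nR u ≠ 0 → 0 < nR u := fun u hu =>
    lt_of_le_of_ne (integral_nonneg fun t => sq_nonneg _) (Ne.symm hu)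
  have hlb : ∀ ε r, (∃ u : ℝ → ℝ, MemB1 u ∧ nR u ≠ 0 ∧ r = QI a m α (η + ε) u / nR u) →
      μ - 2 * ε * M - C * ε ^ 2 ≤ r := by
    rintro ε r ⟨u, hu, hn, rfl⟩
    rw [le_div_iff₀ (npos u hn)]
    exact hlow ε u hu
  have hL : ∀ ε, μ - 2 * ε * M - C * ε ^ 2 ≤ mu1 a m α (η + ε) := fun ε =>
    le_csInf ⟨_, _, gauss_mem.1, gauss_mem.2, rfl⟩ (hlb ε)
  have hle : ∀ ε u, MemB1 u → nR u ≠ 0 → mu1 a m α (η + ε) * nR u ≤ QI a m α (η + ε) u := by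
    intro ε u hu hn
    rw [← le_div_iff₀ (npos u hn)]
    exact csInf_le ⟨_, hlb ε⟩ ⟨u, hu, hn, rfl⟩
  have hU : ∀ ε, mu1 a m α (η + ε) ≤ μ - 2 * ε * M + (C + 2 * (1 + 1 / m)) * ε ^ 2 := by
    intro ε
    have h1 : (mu1 a m α (η + ε) + mu1 a m α (η + -ε)) / 2 - (1 + 1 / m) * ε ^ 2 ≤ μ := by
      rw [hμ]
      refine le_csInf ⟨_, _, gauss_mem.1, gauss_mem.2, rfl⟩ ?_
      rintro r ⟨u, hu, hn, rfl⟩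
      rw [le_div_iff₀ (npos u hn)]
      have a1 := hle ε u hu hn
      have a2 := hle (-ε) u hu hn
      rw [QI_split hu hm 0] at a1 a2 ⊢
      have b1 := Ih_second_diff hu.pos (α + 0) η ε
      have b2 := Ih_second_diff hu.refl (m * (0 - a * α)) (-η) ε
      rw [← sub_eq_add_neg] at a2
      rw [show -(η + ε) = -η - ε by ring] at a1
      rw [show -(η - ε) = -η + ε by ring] at a2
      have b2' := congrArg (fun z => 1 / m * z) b2
      simp only [mul_add] at b2'
      have np1 : 0 ≤ np u := integral_nonneg fun t => sq_nonneg _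
      have np2 : 0 ≤ np (fun t => u (-t)) := integral_nonneg fun t => sq_nonneg _
      have x1 : 0 ≤ 1 / m * (ε ^ 2 * np u) := by positivity
      have x2 : 0 ≤ ε ^ 2 * np (fun t => u (-t)) := by positivity
      have hn' := nR_split_s6 hu.2.1
      have e : ((1 + 1 / m) * ε ^ 2) * nR u = ε ^ 2 * np u + 1 / m * (ε ^ 2 * np u) +
        ε ^ 2 * np (fun t => u (-t)) + 1 / m * (ε ^ 2 * np (fun t => u (-t))) := by
        rw [hn']; ring
      rw [sub_mul, e, ← sub_eq_add_neg η ε]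
      linarith
    have h2 := hL (-ε)
    nlinarith
  have hder : HasDerivAt (fun ξ => mu1 a m α ξ) (-2 * M) η := by
    rw [hasDerivAt_iff_isLittleO_nhds_zero]
    have hO : (fun h : ℝ => mu1 a m α (η + h) - mu1 a m α η - h • (-2 * M)) =O[𝓝 0]
        fun h : ℝ => h ^ 2 := by
      refine Asymptotics.IsBigO.of_bound (C + 2 * (1 + 1 / m)) (Eventually.of_forall fun h => ?_)
      rw [Real.norm_eq_abs, Real.norm_eq_abs, abs_of_nonneg (sq_nonneg h), abs_le, ← hμ,
        smul_eq_mul]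
      have h1 := hL h
      have h2 := hU h
      have : 0 ≤ 2 * (1 + 1 / m) * h ^ 2 := by positivity
      constructor <;> linarith
    refine hO.trans_isLittleO ?_
    simpa using (Asymptotics.isLittleO_pow_id (𝕜 := ℝ) (n := 2) (by norm_num))
  rw [hder.deriv] at hcrit
  linarith
end
end
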